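/- arXiv:1302.3514 — 3 statements merged into one kernel-verified Lean document; each statement's English description precedes it below -/
import Mathlib

section
/- Let a, a', b, a₁, a₁', b₁ > 0 and let X ~ μ_{a,a',b}. Then 1 − X ~ μ_{a₁,a₁',b₁} if and only if a₁ = a', a₁' = a, and b = b₁ = a + a'. -/
open MeasureTheory ProbabilityTheory Real Set Filter Topology

noncomputable def gammaDens (p σ y : ℝ) : ℝ :=
  if 0 < y then σ ^ p / Real.Gamma p * Real.exp (-(σ * y)) * y ^ (p - 1) else 0

noncomputable def gammaM (p σ : ℝ) : Measure ℝ :=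
  MeasureTheory.volume.withDensity fun y => ENNReal.ofReal (gammaDens p σ y)

noncomputable def beta1Dens (p q x : ℝ) : ℝ :=
  if 0 < x ∧ x < 1 then
    Real.Gamma (p + q) / (Real.Gamma p * Real.Gamma q) * x ^ (p - 1) * (1 - x) ^ (q - 1)
  else 0

noncomputable def beta1 (p q : ℝ) : Measure ℝ :=
  MeasureTheory.volume.withDensity fun x => ENNReal.ofReal (beta1Dens p q x)

noncomputable def beta2Dens (p q y : ℝ) : ℝ :=
  if 0 < y then
    Real.Gamma (p + q) / (Real.Gamma p * Real.Gamma q) * y ^ (p - 1) * (1 + y) ^ (-(p + q))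
  else 0

noncomputable def beta2 (p q : ℝ) : Measure ℝ :=
  MeasureTheory.volume.withDensity fun y => ENNReal.ofReal (beta2Dens p q y)

/-- Pochhammer (rising factorial) symbol `(a)_n`. -/
noncomputable def poch (a : ℝ) (n : ℕ) : ℝ := ∏ i ∈ Finset.range n, (a + (i : ℝ))

/-- Gauss hypergeometric function `₂F₁(a,b;c;x)`. -/
noncomputable def F21 (a b c x : ℝ) : ℝ :=
  ∑' n : ℕ, poch a n * poch b n / ((n.factorial : ℝ) * poch c n) * x ^ n

/-- Generalized hypergeometric `₃F₂(a₁,a₂,a₃;b₁,b₂;1)` at unit argument. -/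
noncomputable def F32one (a1 a2 a3 b1 b2 : ℝ) : ℝ :=
  ∑' n : ℕ, poch a1 n * poch a2 n * poch a3 n /
    ((n.factorial : ℝ) * poch b1 n * poch b2 n)

/-- Normalizing constant of the real beta-hypergeometric distribution. -/
noncomputable def Cbh (a a' b : ℝ) : ℝ :=
  Real.Gamma (a + b) / (Real.Gamma a * Real.Gamma b * F32one a a b (a + b) (a + a'))

noncomputable def bhDens (a a' b x : ℝ) : ℝ :=
  if 0 < x ∧ x < 1 then
    Cbh a a' b * x ^ (a - 1) * (1 - x) ^ (b - 1) * F21 a b (a + a') x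
  else 0

/-- The real beta-hypergeometric distribution `μ_{a,a',b}`. -/
noncomputable def bhMeasure (a a' b : ℝ) : Measure ℝ :=
  MeasureTheory.volume.withDensity fun x => ENNReal.ofReal (bhDens a a' b x)

/-!
Comparing the densities of `1 - X` and of `μ_{a₁,a₁',b₁}` on `(0, 1)` gives
`C ₂F₁(a, b; c; 1 - x) x ^ t = C₁ ₂F₁(a₁, b₁; c₁; x) (1 - x) ^ s`, where `c = a + a'`,
`c₁ = a₁ + a₁'`, `t = b - a₁` and `s = b₁ - a`. The right side has a positive limit at `0`, and
the growth of `₂F₁(a, b; c; ·)` at `1` leaves only `t = 0` or `t = a + b - c`; in the second case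
Euler's transformation absorbs the power. The same holds at the other endpoint, so
`C ₂F₁(α, β; c; 1 - x) = C₁ ₂F₁(α₁, β₁; c₁; x)` with `0 < α < c` and `0 < α₁ < c₁`.

Differentiating `₂F₁(α, β; c; ·)` gives a positive multiple of `β` times a positive function and
raises every parameter by one. Hence `β` and `β₁` are both zero or have opposite signs. In the
latter case the derived identity has the same shape with positive constants, so `β + n` and
`β₁ + n` keep opposite signs for every `n`, which is absurd. Finally `β = 0` means `b = c` and
`t = a`.

Conversely, for `b = a + a'` the binomial series turns the density into that of a beta
distribution, which `x ↦ 1 - x` reflects.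
-/

section Coefficients

variable {𝕂 : Type*} [Field 𝕂] (a b c : 𝕂) (n : ℕ)

theorem ordinaryHypergeometricCoefficient_zero :
    ordinaryHypergeometricCoefficient a b c 0 = 1 := by
  simp [ordinaryHypergeometricCoefficient]

theorem ordinaryHypergeometricCoefficient_succ :
    ordinaryHypergeometricCoefficient a b c (n + 1) =
      ordinaryHypergeometricCoefficient a b c n * ((a + n) * (b + n) / ((n + 1) * (c + n))) := by
  simp only [ordinaryHypergeometricCoefficient, ascPochhammer_succ_eval, Nat.factorial_succ,
    Nat.cast_mul, Nat.cast_succ, mul_inv, div_eq_mul_inv]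
  ring

theorem ordinaryHypergeometricCoefficient_succ_mul [CharZero 𝕂] :
    ordinaryHypergeometricCoefficient a b c (n + 1) * (n + 1) =
      a * b / c * ordinaryHypergeometricCoefficient (a + 1) (b + 1) (c + 1) n := by
  have hn : (n + 1 : 𝕂) ≠ 0 := n.cast_add_one_ne_zero
  have eval_succ (s : 𝕂) : (ascPochhammer 𝕂 (n + 1)).eval s =
      s * (ascPochhammer 𝕂 n).eval (s + 1) := by
    simp [ascPochhammer_succ_left, Polynomial.eval_comp]
  simp only [ordinaryHypergeometricCoefficient, eval_succ, Nat.factorial_succ,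
    Nat.cast_mul, Nat.cast_succ, mul_inv, div_eq_mul_inv]
  field_simp

end Coefficients

theorem ordinaryHypergeometricCoefficient_pos {a b c : ℝ} (ha : 0 < a) (hb : 0 < b) (hc : 0 < c)
    (n : ℕ) : 0 < ordinaryHypergeometricCoefficient a b c n := by
  have := ascPochhammer_pos n a ha
  have := ascPochhammer_pos n b hb
  have := ascPochhammer_pos n c hc
  positivity

section UnitBall

variable {𝕜 : Type*} [RCLike 𝕜]

theorem one_le_ordinaryHypergeometricSeries_radius (a b c : 𝕜) :
    1 ≤ (ordinaryHypergeometricSeries 𝕜 a b c).radius := by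
  by_cases h : ∀ k : ℕ, (k : 𝕜) ≠ -a ∧ (k : 𝕜) ≠ -b ∧ (k : 𝕜) ≠ -c
  · exact (ordinaryHypergeometricSeries_radius_eq_one 𝕜 a b c h).ge
  · simp only [not_forall, not_and_or, not_ne_iff, eq_neg_iff_add_eq_zero,
      ← neg_eq_iff_add_eq_zero] at h
    obtain ⟨k, rfl | rfl | rfl⟩ := h
    · simp [ordinaryHypergeometric_radius_top_of_neg_nat₁]
    · simp [ordinaryHypergeometric_radius_top_of_neg_nat₂]
    · simp [ordinaryHypergeometric_radius_top_of_neg_nat₃]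

theorem summable_norm_ordinaryHypergeometricCoefficient_mul_pow (a b c : 𝕜) {x : 𝕜}
    (hx : ‖x‖ < 1) : Summable fun n ↦ ‖ordinaryHypergeometricCoefficient a b c n * x ^ n‖ := by
  have hx' : x ∈ Metric.eball 0 (ordinaryHypergeometricSeries 𝕜 a b c).radius := by
    rw [Metric.mem_eball, edist_zero_right]
    refine lt_of_lt_of_le ?_ (one_le_ordinaryHypergeometricSeries_radius a b c)
    simpa [← ofReal_norm] using hx
  refine ((ordinaryHypergeometricSeries 𝕜 a b c).summable_norm_apply hx').congr fun n ↦ ?_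
  rw [ordinaryHypergeometricSeries_apply_eq, smul_eq_mul]

theorem hasSum_ordinaryHypergeometric (a b c : 𝕜) {x : 𝕜} (hx : ‖x‖ < 1) :
    HasSum (fun n ↦ ordinaryHypergeometricCoefficient a b c n * x ^ n) (₂F₁ a b c x) := by
  simpa only [ordinaryHypergeometric_eq_tsum, smul_eq_mul] using
    (summable_norm_ordinaryHypergeometricCoefficient_mul_pow a b c hx).of_norm.hasSum

theorem hasDerivAt_ordinaryHypergeometric (a b c : 𝕜) {x : 𝕜} (hx : ‖x‖ < 1) :
    HasDerivAt (₂F₁ a b c) (a * b / c * ₂F₁ (a + 1) (b + 1) (c + 1) x) x := by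
  obtain ⟨r, hxr, hr⟩ := exists_between hx
  have hr₀ : 0 < r := (norm_nonneg x).trans_lt hxr
  let term (n : ℕ) (y : 𝕜) := ordinaryHypergeometricCoefficient a b c n * (n * y ^ (n - 1))
  have term_succ (n : ℕ) (y : 𝕜) : term (n + 1) y =
      a * b / c * (ordinaryHypergeometricCoefficient (a + 1) (b + 1) (c + 1) n * y ^ n) := by
    rw [← mul_assoc (a * b / c), ← ordinaryHypergeometricCoefficient_succ_mul]
    simp only [term, Nat.cast_succ, Nat.add_sub_cancel, mul_assoc]
  have summable_term : Summable fun n ↦ ‖term n (r : 𝕜)‖ := by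
    rw [← summable_nat_add_iff 1]
    simp only [term_succ, norm_mul (a * b / c)]
    exact (summable_norm_ordinaryHypergeometricCoefficient_mul_pow _ _ _
      (by simpa [abs_of_pos hr₀] using hr)).mul_left _
  have term_le (n : ℕ) (y : 𝕜) (hy : y ∈ Metric.ball 0 r) : ‖term n y‖ ≤ ‖term n (r : 𝕜)‖ := by
    have : ‖y‖ ≤ r := (mem_ball_zero_iff.1 hy).le
    simp only [term, norm_mul, norm_pow, RCLike.norm_ofReal, abs_of_pos hr₀]
    gcongr
  have hxr' : x ∈ Metric.ball 0 r := mem_ball_zero_iff.2 hxr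
  have key := hasDerivAt_tsum_of_isPreconnected summable_term Metric.isOpen_ball
    (convex_ball (0 : 𝕜) r).isPreconnected (fun n y _ ↦ (hasDerivAt_pow n y).const_mul _) term_le
    hxr' (hasSum_ordinaryHypergeometric a b c hx).summable hxr'
  have sum_term : HasSum (term · x) (a * b / c * ₂F₁ (a + 1) (b + 1) (c + 1) x) := by
    rw [← hasSum_nat_add_iff' 1]
    simpa [term_succ, term] using (hasSum_ordinaryHypergeometric _ _ _ hx).mul_left (a * b / c)
  rw [ordinaryHypergeometric_eq_tsum]
  simpa only [smul_eq_mul] using key.congr_deriv sum_term.tsum_eq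

end UnitBall

theorem norm_lt_one_of_mem_Ico {x : ℝ} (hx : x ∈ Ico 0 1) : ‖x‖ < 1 := by
  rw [Real.norm_of_nonneg hx.1]
  exact hx.2

theorem continuousOn_ordinaryHypergeometric (a b c : ℝ) :
    ContinuousOn (₂F₁ a b c : ℝ → ℝ) (Ico 0 1) := fun _ hx ↦
  (hasDerivAt_ordinaryHypergeometric a b c
    (norm_lt_one_of_mem_Ico hx)).continuousAt.continuousWithinAt

theorem one_le_ordinaryHypergeometric {a b c x : ℝ} (ha : 0 < a) (hb : 0 < b) (hc : 0 < c)
    (hx : x ∈ Ico 0 1) : 1 ≤ ₂F₁ a b c x := by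
  have sum := hasSum_ordinaryHypergeometric a b c (norm_lt_one_of_mem_Ico hx)
  calc 1 = ordinaryHypergeometricCoefficient a b c 0 * x ^ 0 := by
        simp [ordinaryHypergeometricCoefficient_zero]
    _ ≤ ₂F₁ a b c x := le_hasSum sum 0 fun n _ ↦
        mul_nonneg (ordinaryHypergeometricCoefficient_pos ha hb hc n).le (pow_nonneg hx.1 n)

theorem natCast_ne_neg_of_pos {c : ℝ} (hc : 0 < c) (k : ℕ) : (k : ℝ) ≠ -c := by
  refine ne_of_gt ?_
  have := k.cast_nonneg (α := ℝ)
  linarith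

theorem ordinaryHypergeometric_self_right (s : ℝ) {c x : ℝ} (hc : ∀ k : ℕ, (k : ℝ) ≠ -c)
    (hx : ‖x‖ < 1) : ₂F₁ s c c x = (1 - x) ^ (-s) := by
  have hx' : -x ∈ Metric.eball (0 : ℝ) 1 := by
    simpa [Metric.mem_eball, edist_zero_right, ← ofReal_norm] using hx
  have binomial := (one_add_rpow_hasFPowerSeriesOnBall_zero (a := -s)).hasSum hx'
  rw [zero_add, ← sub_eq_add_neg, binomialSeries_eq_ordinaryHypergeometricSeries hc, neg_neg]
    at binomial
  have neg_comp (n : ℕ) : ⇑(-ContinuousLinearMap.id ℝ ℝ) ∘ (fun _ ↦ -x) = fun _ : Fin n ↦ x := by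
    ext; simp
  simp only [FormalMultilinearSeries.compContinuousLinearMap_apply, neg_comp,
    ordinaryHypergeometricSeries_apply_eq] at binomial
  exact (hasSum_ordinaryHypergeometric s c c hx).unique binomial

section EulerTransformation

open PowerSeries

/-- The Gauss hypergeometric operator `X (1 - X) f'' + (c - (a + b + 1) X) f' - a b f`, acting on
formal power series so that derivatives need no convergence. -/
noncomputable def hypergeometricOperator {R : Type*} [CommRing R] (a b c : R) (f : R⟦X⟧) : R⟦X⟧ :=
  X * (1 - X) * d⁄dX R (d⁄dX R f) + (C c - C (a + b + 1) * X) * d⁄dX R f - C (a * b) * f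

theorem coeff_hypergeometricOperator {R : Type*} [CommRing R] (a b c : R) (f : R⟦X⟧) (n : ℕ) :
    coeff n (hypergeometricOperator a b c f) =
      (n + 1) * (c + n) * coeff (n + 1) f - (a + n) * (b + n) * coeff n f := by
  have expand : hypergeometricOperator a b c f = X * d⁄dX R (d⁄dX R f)
      - X * (X * d⁄dX R (d⁄dX R f)) + C c * d⁄dX R f - C (a + b + 1) * (X * d⁄dX R f)
      - C (a * b) * f := by
    rw [hypergeometricOperator]
    ring
  rcases n with _ | _ | n <;>
  · simp only [expand, map_add (coeff _), map_sub (coeff _), coeff_C_mul, coeff_derivative,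
      coeff_succ_X_mul, coeff_zero_X_mul]
    push_cast
    ring

/- Formally `h = (1 - X) ^ (a + b - c)`: conjugation by this power exchanges the exponents
`0` and `c - a - b` of the hypergeometric equation at `1`. -/
theorem hypergeometricOperator_mul {R : Type*} [CommRing R] {a b c : R} {h : R⟦X⟧}
    (hh : (1 - X) * d⁄dX R h = C (c - a - b) * h) (f : R⟦X⟧) :
    hypergeometricOperator (c - a) (c - b) c (h * f) = h * hypergeometricOperator a b c f := by
  have hh' : (1 - X) * d⁄dX R (d⁄dX R h) = C (c - a - b + 1) * d⁄dX R h := by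
    have := congrArg (d⁄dX R) hh
    simp only [Derivation.leibniz, map_sub, map_one, derivative_X, derivative_C, smul_eq_mul,
      Derivation.map_one_eq_zero, map_add] at this ⊢
    linear_combination this
  have one_sub_X_isUnit : IsUnit (1 - X : R⟦X⟧) := by simp [isUnit_iff_constantCoeff]
  refine one_sub_X_isUnit.mul_left_cancel ?_
  simp only [hypergeometricOperator, Derivation.leibniz, map_add, map_sub, map_mul, map_one,
    smul_eq_mul] at hh hh' ⊢
  linear_combination X * (1 - X) * f * hh' +
    (X * f * (C c - C a - C b + 1) + 2 * X * (1 - X) * d⁄dX R f +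
      (C c - (2 * C c - C a - C b + 1) * X) * f) * hh

variable {𝕂 : Type*} [Field 𝕂] {c : 𝕂}

theorem add_natCast_ne_zero (hc : ∀ k : ℕ, (k : 𝕂) ≠ -c) (n : ℕ) : c + n ≠ 0 := by
  rw [add_comm]
  exact hc n ∘ eq_neg_of_add_eq_zero_left

variable [CharZero 𝕂]

theorem hypergeometricOperator_mk_coefficient (a b : 𝕂) (hc : ∀ k : ℕ, (k : 𝕂) ≠ -c) :
    hypergeometricOperator a b c (mk (ordinaryHypergeometricCoefficient a b c)) = 0 := by
  ext n
  rw [coeff_hypergeometricOperator, coeff_mk, coeff_mk,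
    ordinaryHypergeometricCoefficient_succ, map_zero]
  field_simp [n.cast_add_one_ne_zero, add_natCast_ne_zero hc n]
  ring

theorem eq_mk_coefficient_of_hypergeometricOperator_eq_zero {a b : 𝕂}
    (hc : ∀ k : ℕ, (k : 𝕂) ≠ -c) {f : 𝕂⟦X⟧} (hf₀ : constantCoeff f = 1)
    (hf : hypergeometricOperator a b c f = 0) :
    f = mk (ordinaryHypergeometricCoefficient a b c) := by
  ext n
  induction n with
  | zero => simpa [ordinaryHypergeometricCoefficient_zero] using hf₀
  | succ n ih =>
    have recurrence := congrArg (coeff n) hf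
    rw [coeff_hypergeometricOperator, ih, coeff_mk, map_zero, sub_eq_zero] at recurrence
    rw [coeff_mk, ordinaryHypergeometricCoefficient_succ]
    field_simp [n.cast_add_one_ne_zero, add_natCast_ne_zero hc n]
    linear_combination recurrence

theorem one_sub_X_mul_derivative_mk_coefficient (s : 𝕂) (hc : ∀ k : ℕ, (k : 𝕂) ≠ -c) :
    (1 - X) * d⁄dX 𝕂 (mk (ordinaryHypergeometricCoefficient s c c)) =
      C s * mk (ordinaryHypergeometricCoefficient s c c) := by
  ext n
  have recurrence : ordinaryHypergeometricCoefficient s c c (n + 1) * (n + 1) =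
      ordinaryHypergeometricCoefficient s c c n * (s + n) := by
    rw [ordinaryHypergeometricCoefficient_succ]
    field_simp [n.cast_add_one_ne_zero, add_natCast_ne_zero hc n]
  rw [sub_mul, one_mul, map_sub, coeff_C_mul, coeff_derivative, coeff_mk, recurrence, coeff_mk]
  cases n with
  | zero => simp
  | succ n =>
    rw [coeff_succ_X_mul, coeff_derivative, coeff_mk]
    push_cast
    ring

theorem mk_coefficient_mul_mk_coefficient (a b : 𝕂) (hc : ∀ k : ℕ, (k : 𝕂) ≠ -c) :
    mk (ordinaryHypergeometricCoefficient (c - a - b) c c) *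
        mk (ordinaryHypergeometricCoefficient a b c) =
      mk (ordinaryHypergeometricCoefficient (c - a) (c - b) c) := by
  refine eq_mk_coefficient_of_hypergeometricOperator_eq_zero hc ?_ ?_
  · simp [ordinaryHypergeometricCoefficient_zero]
  · rw [hypergeometricOperator_mul (one_sub_X_mul_derivative_mk_coefficient _ hc),
      hypergeometricOperator_mk_coefficient a b hc, mul_zero]

theorem one_sub_rpow_mul_ordinaryHypergeometric (a b : ℝ) {c x : ℝ}
    (hc : ∀ k : ℕ, (k : ℝ) ≠ -c) (hx : ‖x‖ < 1) :
    (1 - x) ^ (a + b - c) * ₂F₁ a b c x = ₂F₁ (c - a) (c - b) c x := by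
  have summable (a b : ℝ) :=
    summable_norm_ordinaryHypergeometricCoefficient_mul_pow a b c hx
  have cauchy_coeff (n : ℕ) :
      ∑ p ∈ Finset.HasAntidiagonal.antidiagonal n,
          ordinaryHypergeometricCoefficient (c - a - b) c c p.1 * x ^ p.1 *
            (ordinaryHypergeometricCoefficient a b c p.2 * x ^ p.2) =
        ordinaryHypergeometricCoefficient (c - a) (c - b) c n * x ^ n := by
    have := congrArg (coeff n) (mk_coefficient_mul_mk_coefficient a b hc)
    simp only [coeff_mul, coeff_mk] at this
    rw [← this, Finset.sum_mul]
    refine Finset.sum_congr rfl fun p hp ↦ ?_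
    rw [← Finset.HasAntidiagonal.mem_antidiagonal.1 hp, pow_add]
    ring
  calc (1 - x) ^ (a + b - c) * ₂F₁ a b c x
      = ₂F₁ (c - a - b) c c x * ₂F₁ a b c x := by
        rw [ordinaryHypergeometric_self_right _ hc hx]
        ring_nf
    _ = ₂F₁ (c - a) (c - b) c x := by
        rw [← (hasSum_ordinaryHypergeometric (c - a - b) c c hx).tsum_eq,
          ← (hasSum_ordinaryHypergeometric a b c hx).tsum_eq,
          tsum_mul_tsum_eq_tsum_sum_antidiagonal_of_summable_norm (summable _ _) (summable _ _),
          tsum_congr cauchy_coeff, (hasSum_ordinaryHypergeometric _ _ _ hx).tsum_eq]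

end EulerTransformation

theorem ordinaryHypergeometric_pos {a b c x : ℝ} (ha : 0 < a) (hac : a < c) (hx : x ∈ Ico 0 1) :
    0 < ₂F₁ a b c x := by
  have hc : 0 < c := ha.trans hac
  rcases lt_or_ge 0 b with hb | hb
  · exact one_pos.trans_le (one_le_ordinaryHypergeometric ha hb hc hx)
  · have h : 0 < ₂F₁ (c - a) (c - b) c x :=
      one_pos.trans_le (one_le_ordinaryHypergeometric (by linarith) (by linarith) hc hx)
    rw [← one_sub_rpow_mul_ordinaryHypergeometric a b (natCast_ne_neg_of_pos hc)
      (norm_lt_one_of_mem_Ico hx)] at h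
    exact pos_of_mul_pos_right h (rpow_nonneg (sub_nonneg.2 hx.2.le) _)

section Reflection

theorem one_sub_mem_Ioo {x : ℝ} (hx : x ∈ Ioo 0 1) : 1 - x ∈ Ioo 0 1 :=
  ⟨sub_pos.2 hx.2, sub_lt_self 1 hx.1⟩

variable {A B α β c α₁ β₁ c₁ : ℝ}

theorem deriv_reflected_ordinaryHypergeometric_eq
    (h : ∀ x ∈ Ioo (0 : ℝ) 1, A * ₂F₁ α β c (1 - x) = B * ₂F₁ α₁ β₁ c₁ x) :
    ∀ x ∈ Ioo (0 : ℝ) 1, A * (α * β / c) * ₂F₁ (α + 1) (β + 1) (c + 1) (1 - x) =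
      -(B * (α₁ * β₁ / c₁)) * ₂F₁ (α₁ + 1) (β₁ + 1) (c₁ + 1) x := by
  intro x hx
  have deriv_left := ((hasDerivAt_ordinaryHypergeometric α β c (norm_lt_one_of_mem_Ico
    (Ioo_subset_Ico_self (one_sub_mem_Ioo hx)))).comp_const_sub 1 x).const_mul A
  have deriv_right := (hasDerivAt_ordinaryHypergeometric α₁ β₁ c₁ (norm_lt_one_of_mem_Ico
    (Ioo_subset_Ico_self hx))).const_mul B
  have eventually_eq : (fun y ↦ A * ₂F₁ α β c (1 - y)) =ᶠ[𝓝 x] fun y ↦ B * ₂F₁ α₁ β₁ c₁ y :=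
    eventually_of_mem (isOpen_Ioo.mem_nhds hx) h
  linarith [deriv_left.unique (deriv_right.congr_of_eventuallyEq eventually_eq)]

theorem exists_pos_eq_neg_mul_of_reflected_eq (hA : 0 < A) (hB : 0 < B) (hα : 0 < α) (hαc : α < c)
    (hα₁ : 0 < α₁) (hαc₁ : α₁ < c₁)
    (h : ∀ x ∈ Ioo (0 : ℝ) 1, A * ₂F₁ α β c (1 - x) = B * ₂F₁ α₁ β₁ c₁ x) :
    ∃ u > 0, β₁ = -(u * β) := by
  have half_mem : (1 / 2 : ℝ) ∈ Ioo 0 1 := by norm_num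
  have hF : 0 < ₂F₁ (α + 1) (β + 1) (c + 1) (1 - 1 / 2 : ℝ) :=
    ordinaryHypergeometric_pos (by linarith) (by linarith)
      (Ioo_subset_Ico_self (one_sub_mem_Ioo half_mem))
  have hF₁ : 0 < ₂F₁ (α₁ + 1) (β₁ + 1) (c₁ + 1) (1 / 2 : ℝ) :=
    ordinaryHypergeometric_pos (by linarith) (by linarith) (Ioo_subset_Ico_self half_mem)
  have deriv_eq := deriv_reflected_ordinaryHypergeometric_eq h _ half_mem
  generalize ₂F₁ (α + 1) (β + 1) (c + 1) (1 - 1 / 2 : ℝ) = F at hF deriv_eq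
  generalize ₂F₁ (α₁ + 1) (β₁ + 1) (c₁ + 1) (1 / 2 : ℝ) = F₁ at hF₁ deriv_eq
  have hc : 0 < c := hα.trans hαc
  have hc₁ : 0 < c₁ := hα₁.trans hαc₁
  refine ⟨A * α / c * F / (B * α₁ / c₁ * F₁), by positivity, ?_⟩
  field_simp at deriv_eq ⊢
  linarith

theorem neg_of_reflected_eq (hA : 0 < A) (hB : 0 < B) (hα : 0 < α) (hαc : α < c)
    (hα₁ : 0 < α₁) (hαc₁ : α₁ < c₁) (hβ : 0 < β)
    (h : ∀ x ∈ Ioo (0 : ℝ) 1, A * ₂F₁ α β c (1 - x) = B * ₂F₁ α₁ β₁ c₁ x) : β₁ < 0 := by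
  obtain ⟨u, hu, rfl⟩ := exists_pos_eq_neg_mul_of_reflected_eq hA hB hα hαc hα₁ hαc₁ h
  exact neg_neg_of_pos (mul_pos hu hβ)

/- Differentiating flips the sign of one side and `β₁ < 0` flips it back, so both constants stay
positive while `β₁` is raised by one; hence `β₁ + n < 0` for every `n`. -/
theorem lt_neg_natCast_of_reflected_eq (n : ℕ) (hA : 0 < A) (hB : 0 < B) (hα : 0 < α)
    (hαc : α < c) (hα₁ : 0 < α₁) (hαc₁ : α₁ < c₁) (hβ : 0 < β)
    (h : ∀ x ∈ Ioo (0 : ℝ) 1, A * ₂F₁ α β c (1 - x) = B * ₂F₁ α₁ β₁ c₁ x) : β₁ < -n := by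
  have hβ₁ : β₁ < 0 := neg_of_reflected_eq hA hB hα hαc hα₁ hαc₁ hβ h
  induction n generalizing A B α β c α₁ β₁ c₁ with
  | zero => simpa using hβ₁
  | succ n ih =>
    have hc : 0 < c := hα.trans hαc
    have hA' : 0 < A * (α * β / c) := by positivity
    have hB' : 0 < -(B * (α₁ * β₁ / c₁)) := neg_pos.2 <| mul_neg_of_pos_of_neg hB <|
      div_neg_of_neg_of_pos (mul_neg_of_pos_of_neg hα₁ hβ₁) (hα₁.trans hαc₁)
    have h' := deriv_reflected_ordinaryHypergeometric_eq h
    have hβ₁' : β₁ + 1 < 0 := neg_of_reflected_eq hA' hB' (by linarith) (by linarith)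
      (by linarith) (by linarith) (by linarith) h'
    have := ih hA' hB' (by linarith) (by linarith) (by linarith) (by linarith) (by linarith) h' hβ₁'
    push_cast
    linarith

theorem nonpos_of_reflected_eq (hA : 0 < A) (hB : 0 < B) (hα : 0 < α) (hαc : α < c)
    (hα₁ : 0 < α₁) (hαc₁ : α₁ < c₁)
    (h : ∀ x ∈ Ioo (0 : ℝ) 1, A * ₂F₁ α β c (1 - x) = B * ₂F₁ α₁ β₁ c₁ x) : β ≤ 0 := by
  by_contra! hβ
  obtain ⟨n, hn⟩ := exists_nat_gt (-β₁)
  linarith [lt_neg_natCast_of_reflected_eq n hA hB hα hαc hα₁ hαc₁ hβ h]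

theorem eq_zero_of_reflected_eq (hA : 0 < A) (hB : 0 < B) (hα : 0 < α) (hαc : α < c)
    (hα₁ : 0 < α₁) (hαc₁ : α₁ < c₁)
    (h : ∀ x ∈ Ioo (0 : ℝ) 1, A * ₂F₁ α β c (1 - x) = B * ₂F₁ α₁ β₁ c₁ x) :
    β = 0 ∧ β₁ = 0 := by
  have h_symm : ∀ x ∈ Ioo (0 : ℝ) 1, B * ₂F₁ α₁ β₁ c₁ (1 - x) = A * ₂F₁ α β c x := fun x hx ↦ by
    rw [← h _ (one_sub_mem_Ioo hx), sub_sub_cancel]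
  have hβ : β ≤ 0 := nonpos_of_reflected_eq hA hB hα hαc hα₁ hαc₁ h
  have hβ₁ : β₁ ≤ 0 := nonpos_of_reflected_eq hB hA hα₁ hαc₁ hα hαc h_symm
  obtain ⟨u, hu, rfl⟩ := exists_pos_eq_neg_mul_of_reflected_eq hA hB hα hαc hα₁ hαc₁ h
  have : β = 0 := by nlinarith
  simp [this]

end Reflection

section Growth

open Asymptotics

theorem ascPochhammer_eval_eq_prod {R : Type*} [CommSemiring R] (s : R) (n : ℕ) :
    (ascPochhammer R n).eval s = ∏ i ∈ Finset.range n, (s + i) := by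
  induction n with
  | zero => simp
  | succ n ih => rw [ascPochhammer_succ_eval, ih, Finset.prod_range_succ]

theorem ascPochhammer_eval_isEquivalent {s : ℝ} (hs : Gamma s ≠ 0) :
    (fun n : ℕ ↦ (ascPochhammer ℝ n).eval s) ~[atTop]
      fun n ↦ n.factorial * (n : ℝ) ^ (s - 1) / Gamma s := by
  have ratio : Tendsto (fun n : ℕ ↦ (n : ℝ) / (s + n)) atTop (𝓝 1) := by
    simpa using tendsto_add_mul_div_add_mul_atTop_nhds 0 s (1 : ℝ) one_ne_zero
  have h := ((GammaSeq_tendsto_Gamma s).inv₀ hs).mul_const (Gamma s) |>.mul ratio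
  rw [inv_mul_cancel₀ hs, one_mul] at h
  refine isEquivalent_of_tendsto_one (h.congr' ?_)
  filter_upwards [eventually_gt_atTop 0, eventually_gt_atTop ⌈-s⌉₊] with n hn hsn
  have hn' : (0 : ℝ) < n := Nat.cast_pos.2 hn
  have hsn' : 0 < s + n := by linarith [Nat.lt_of_ceil_lt hsn]
  rw [GammaSeq, Finset.prod_range_succ, ← ascPochhammer_eval_eq_prod, Pi.div_apply,
    rpow_sub_one hn'.ne']
  field_simp

theorem ordinaryHypergeometricCoefficient_isEquivalent {a b c : ℝ} (ha : Gamma a ≠ 0)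
    (hb : Gamma b ≠ 0) (hc : Gamma c ≠ 0) :
    ordinaryHypergeometricCoefficient a b c ~[atTop]
      fun n ↦ Gamma c / (Gamma a * Gamma b) * (n : ℝ) ^ (a + b - c - 1) := by
  refine (((IsEquivalent.refl (u := fun n : ℕ ↦ (n.factorial : ℝ)⁻¹)).mul
    (ascPochhammer_eval_isEquivalent ha)).mul (ascPochhammer_eval_isEquivalent hb)).mul
    (ascPochhammer_eval_isEquivalent hc).inv |>.congr_right ?_
  filter_upwards [eventually_gt_atTop 0] with n hn
  have hn' : (0 : ℝ) < n := Nat.cast_pos.2 hn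
  rw [show a + b - c - 1 = (a - 1) + (b - 1) - (c - 1) by ring, rpow_sub hn', rpow_add hn']
  simp only [Pi.mul_apply, Pi.inv_apply]
  field_simp

theorem ordinaryHypergeometricCoefficient_isBigO {a b c a' b' c' : ℝ} (ha : 0 < a) (hb : 0 < b)
    (hc : 0 < c) (ha' : 0 < a') (hb' : 0 < b') (hc' : 0 < c') (h : a + b - c ≤ a' + b' - c') :
    ordinaryHypergeometricCoefficient a b c =O[atTop]
      ordinaryHypergeometricCoefficient a' b' c' := by
  have Gamma_ne_zero {s : ℝ} (hs : 0 < s) : Gamma s ≠ 0 := (Gamma_pos_of_pos hs).ne'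
  have rpow_isBigO : (fun n : ℕ ↦ (n : ℝ) ^ (a + b - c - 1)) =O[atTop]
      fun n : ℕ ↦ (n : ℝ) ^ (a' + b' - c' - 1) := by
    refine .of_bound' ?_
    filter_upwards [eventually_ge_atTop 1] with n hn
    simp only [Real.norm_of_nonneg (rpow_nonneg (Nat.cast_nonneg n) _)]
    exact rpow_le_rpow_of_exponent_le (Nat.one_le_cast.2 hn) (by linarith)
  refine (ordinaryHypergeometricCoefficient_isEquivalent (Gamma_ne_zero ha) (Gamma_ne_zero hb)
    (Gamma_ne_zero hc)).isBigO.trans ?_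
  refine .trans ?_ (ordinaryHypergeometricCoefficient_isEquivalent (Gamma_ne_zero ha')
    (Gamma_ne_zero hb') (Gamma_ne_zero hc')).symm.isBigO
  refine (rpow_isBigO.const_mul_left _).const_mul_right ?_
  exact div_ne_zero (Gamma_ne_zero hc') (mul_ne_zero (Gamma_ne_zero ha') (Gamma_ne_zero hb'))

theorem exists_ordinaryHypergeometric_le_mul {a b c a' b' c' : ℝ} (ha : 0 < a) (hb : 0 < b)
    (hc : 0 < c) (ha' : 0 < a') (hb' : 0 < b') (hc' : 0 < c') (h : a + b - c ≤ a' + b' - c') :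
    ∃ K > 0, ∀ y ∈ Ico (0 : ℝ) 1, ₂F₁ a b c y ≤ K * ₂F₁ a' b' c' y := by
  have pos := ordinaryHypergeometricCoefficient_pos ha hb hc
  have pos' := ordinaryHypergeometricCoefficient_pos ha' hb' hc'
  obtain ⟨K, hK, hle⟩ := bound_of_isBigO_nat_atTop
    (ordinaryHypergeometricCoefficient_isBigO ha hb hc ha' hb' hc' h)
  refine ⟨K, hK, fun y hy ↦ hasSum_le (fun n ↦ ?_)
    (hasSum_ordinaryHypergeometric a b c (norm_lt_one_of_mem_Ico hy))
    ((hasSum_ordinaryHypergeometric a' b' c' (norm_lt_one_of_mem_Ico hy)).mul_left K)⟩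
  rw [← mul_assoc]
  have := hle (pos' n).ne'
  rw [Real.norm_of_nonneg (pos n).le, Real.norm_of_nonneg (pos' n).le] at this
  exact mul_le_mul_of_nonneg_right this (pow_nonneg hy.1 n)

theorem exists_ordinaryHypergeometric_le_mul_rpow {a b c σ : ℝ} (ha : 0 < a) (hb : 0 < b)
    (hc : 0 < c) (hσ : 0 < σ) (h : a + b - c ≤ σ) :
    ∃ K > 0, ∀ y ∈ Ico (0 : ℝ) 1, ₂F₁ a b c y ≤ K * (1 - y) ^ (-σ) := by
  obtain ⟨K, hK, hle⟩ := exists_ordinaryHypergeometric_le_mul ha hb hc hσ one_pos one_pos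
    (by linarith)
  refine ⟨K, hK, fun y hy ↦ ?_⟩
  rw [← ordinaryHypergeometric_self_right σ (natCast_ne_neg_of_pos one_pos)
    (norm_lt_one_of_mem_Ico hy)]
  exact hle y hy

theorem exists_mul_rpow_le_ordinaryHypergeometric {a b c σ : ℝ} (ha : 0 < a) (hb : 0 < b)
    (hc : 0 < c) (hσ : 0 < σ) (h : σ ≤ a + b - c) :
    ∃ K > 0, ∀ y ∈ Ico (0 : ℝ) 1, K * (1 - y) ^ (-σ) ≤ ₂F₁ a b c y := by
  obtain ⟨K, hK, hle⟩ := exists_ordinaryHypergeometric_le_mul hσ one_pos one_pos ha hb hc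
    (by linarith)
  refine ⟨K⁻¹, inv_pos.2 hK, fun y hy ↦ ?_⟩
  rw [inv_mul_le_iff₀ hK, ← ordinaryHypergeometric_self_right σ (natCast_ne_neg_of_pos one_pos)
    (norm_lt_one_of_mem_Ico hy)]
  exact hle y hy

theorem tendsto_one_sub_nhdsLT_one : Tendsto (fun y : ℝ ↦ 1 - y) (𝓝[<] 1) (𝓝[>] 0) := by
  refine tendsto_nhdsWithin_iff.2 ⟨Tendsto.mono_left ?_ nhdsWithin_le_nhds, ?_⟩
  · exact Continuous.tendsto' (by fun_prop) _ _ (sub_self 1)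
  · filter_upwards [self_mem_nhdsWithin] with y hy using mem_Ioi.2 (sub_pos.2 hy)

theorem Ioo_zero_one_mem_nhdsLT_one : Ioo (0 : ℝ) 1 ∈ 𝓝[<] 1 := Ioo_mem_nhdsLT one_pos

theorem le_of_tendsto_of_rpow_le {f : ℝ → ℝ} {κ σ t L : ℝ} (hκ : 0 < κ)
    (hf : Tendsto (fun y ↦ f y * (1 - y) ^ t) (𝓝[<] 1) (𝓝 L))
    (hle : ∀ y ∈ Ioo (0 : ℝ) 1, κ * (1 - y) ^ (-σ) ≤ f y) : σ ≤ t := by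
  by_contra! hσ
  have unbounded : Tendsto (fun y : ℝ ↦ κ * (1 - y) ^ (t - σ)) (𝓝[<] 1) atTop :=
    ((tendsto_rpow_neg_nhdsGT_zero (sub_neg.2 hσ)).comp
      tendsto_one_sub_nhdsLT_one).const_mul_atTop hκ
  refine not_tendsto_nhds_of_tendsto_atTop (tendsto_atTop_mono' _ ?_ unbounded) _ hf
  filter_upwards [Ioo_zero_one_mem_nhdsLT_one] with y hy
  have hy' : 0 < 1 - y := sub_pos.2 hy.2
  rw [sub_eq_neg_add t, rpow_add hy', ← mul_assoc]
  exact mul_le_mul_of_nonneg_right (hle y hy) (rpow_nonneg hy'.le _)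

theorem le_of_tendsto_of_le_rpow {f : ℝ → ℝ} {κ σ t L : ℝ} (hL : 0 < L)
    (hf : Tendsto (fun y ↦ f y * (1 - y) ^ t) (𝓝[<] 1) (𝓝 L))
    (hle : ∀ y ∈ Ioo (0 : ℝ) 1, f y ≤ κ * (1 - y) ^ (-σ)) : t ≤ σ := by
  by_contra! hσ
  have rpow_tendsto : Tendsto (fun x : ℝ ↦ x ^ (t - σ)) (𝓝[>] 0) (𝓝 0) := by
    have := (continuousAt_rpow_const 0 (t - σ) (.inr (sub_pos.2 hσ).le)).tendsto
    rw [zero_rpow (sub_pos.2 hσ).ne'] at this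
    exact this.mono_left nhdsWithin_le_nhds
  have vanishing := (rpow_tendsto.comp tendsto_one_sub_nhdsLT_one).const_mul κ
  rw [mul_zero] at vanishing
  refine hL.not_ge (le_of_tendsto_of_tendsto hf vanishing ?_)
  filter_upwards [Ioo_zero_one_mem_nhdsLT_one] with y hy
  have hy' : 0 < 1 - y := sub_pos.2 hy.2
  rw [Function.comp_apply, sub_eq_neg_add t, rpow_add hy', ← mul_assoc]
  exact mul_le_mul_of_nonneg_right (hle y hy) (rpow_nonneg hy'.le _)

theorem eq_zero_or_eq_of_tendsto_ordinaryHypergeometric_mul_rpow {a b c t L : ℝ} (ha : 0 < a)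
    (hb : 0 < b) (hc : 0 < c) (hL : 0 < L)
    (h : Tendsto (fun y ↦ ₂F₁ a b c y * (1 - y) ^ t) (𝓝[<] 1) (𝓝 L)) :
    t = 0 ∨ t = a + b - c := by
  have t_nonneg : 0 ≤ t := by
    refine le_of_tendsto_of_rpow_le one_pos h fun y hy ↦ ?_
    simpa using one_le_ordinaryHypergeometric ha hb hc (Ioo_subset_Ico_self hy)
  refine t_nonneg.eq_or_lt.imp Eq.symm fun t_pos ↦ ?_
  have t_le : t ≤ a + b - c := by
    obtain ⟨K, -, hle⟩ := exists_ordinaryHypergeometric_le_mul_rpow ha hb hc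
      (lt_max_of_lt_right (half_pos t_pos)) (le_max_left (a + b - c) (t / 2))
    have := le_of_tendsto_of_le_rpow hL h fun y hy ↦ hle y (Ioo_subset_Ico_self hy)
    exact (le_max_iff.1 this).resolve_right (by linarith)
  obtain ⟨K, hK, hle⟩ := exists_mul_rpow_le_ordinaryHypergeometric ha hb hc
    (t_pos.trans_le t_le) le_rfl
  exact t_le.antisymm
    (le_of_tendsto_of_rpow_le hK h fun y hy ↦ hle y (Ioo_subset_Ico_self hy))

end Growth

section Rigidity

theorem exists_ordinaryHypergeometric_mul_rpow_eq {a b c t L : ℝ} (ha : 0 < a) (hac : a < c)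
    (hb : 0 < b) (hL : 0 < L)
    (h : Tendsto (fun y ↦ ₂F₁ a b c y * (1 - y) ^ t) (𝓝[<] 1) (𝓝 L)) :
    ∃ α β, 0 < α ∧ α < c ∧
      (∀ y ∈ Ioo (0 : ℝ) 1, ₂F₁ a b c y * (1 - y) ^ t = ₂F₁ α β c y) ∧
      (β = 0 → b = c ∧ t = a) := by
  have hc : 0 < c := ha.trans hac
  rcases eq_zero_or_eq_of_tendsto_ordinaryHypergeometric_mul_rpow ha hb hc hL h with rfl | rfl
  · exact ⟨a, b, ha, hac, fun y _ ↦ by rw [rpow_zero, mul_one], fun hb₀ ↦ absurd hb₀ hb.ne'⟩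
  · refine ⟨c - a, c - b, by linarith, by linarith, fun y hy ↦ ?_, fun hbc ↦ ?_⟩
    · rw [mul_comm, one_sub_rpow_mul_ordinaryHypergeometric a b (natCast_ne_neg_of_pos hc)
        (norm_lt_one_of_mem_Ico (Ioo_subset_Ico_self hy))]
    · constructor <;> linarith

theorem tendsto_ordinaryHypergeometric_mul_rpow_of_reflected_eq {A B a b c a₁ b₁ c₁ s t : ℝ}
    (hA : 0 < A)
    (h : ∀ x ∈ Ioo (0 : ℝ) 1, A * (₂F₁ a b c (1 - x) * x ^ t) =
      B * (₂F₁ a₁ b₁ c₁ x * (1 - x) ^ s)) :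
    Tendsto (fun y ↦ ₂F₁ a b c y * (1 - y) ^ t) (𝓝[<] 1) (𝓝 (B / A)) := by
  have right_continuous : ContinuousAt (fun x ↦ B / A * (₂F₁ a₁ b₁ c₁ x * (1 - x) ^ s)) 0 := by
    have hF : ContinuousAt (₂F₁ a₁ b₁ c₁) (0 : ℝ) :=
      (hasDerivAt_ordinaryHypergeometric a₁ b₁ c₁ (by simp)).continuousAt
    have hpow : ContinuousAt (fun x : ℝ ↦ (1 - x) ^ s) 0 :=
      (continuousAt_const.sub continuousAt_id).rpow_const (.inl (by simp))
    exact continuousAt_const.mul (hF.mul hpow)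
  have right_tendsto := right_continuous.tendsto.mono_left (nhdsWithin_le_nhds (s := Ioi 0))
  simp only [ordinaryHypergeometric_zero, sub_zero, one_rpow, mul_one] at right_tendsto
  refine (right_tendsto.comp tendsto_one_sub_nhdsLT_one).congr' ?_
  filter_upwards [Ioo_zero_one_mem_nhdsLT_one] with y hy
  have := h _ (one_sub_mem_Ioo hy)
  rw [sub_sub_cancel] at this
  rw [Function.comp_apply, sub_sub_cancel]
  field_simp
  linarith

theorem eq_of_reflected_mul_rpow_eq {A B a b c a₁ b₁ c₁ s t : ℝ} (hA : 0 < A) (hB : 0 < B)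
    (ha : 0 < a) (hac : a < c) (hb : 0 < b) (ha₁ : 0 < a₁) (hac₁ : a₁ < c₁) (hb₁ : 0 < b₁)
    (h : ∀ x ∈ Ioo (0 : ℝ) 1, A * (₂F₁ a b c (1 - x) * x ^ t) =
      B * (₂F₁ a₁ b₁ c₁ x * (1 - x) ^ s)) :
    b = c ∧ t = a ∧ b₁ = c₁ ∧ s = a₁ := by
  have h_symm : ∀ x ∈ Ioo (0 : ℝ) 1, B * (₂F₁ a₁ b₁ c₁ (1 - x) * x ^ s) =
      A * (₂F₁ a b c x * (1 - x) ^ t) := fun x hx ↦ by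
    simpa using (h _ (one_sub_mem_Ioo hx)).symm
  obtain ⟨α, β, hα, hαc, eq_F, zero_imp⟩ := exists_ordinaryHypergeometric_mul_rpow_eq ha hac hb
    (div_pos hB hA) (tendsto_ordinaryHypergeometric_mul_rpow_of_reflected_eq hA h)
  obtain ⟨α₁, β₁, hα₁, hαc₁, eq_F₁, zero_imp₁⟩ := exists_ordinaryHypergeometric_mul_rpow_eq ha₁
    hac₁ hb₁ (div_pos hA hB) (tendsto_ordinaryHypergeometric_mul_rpow_of_reflected_eq hB h_symm)
  have regular_eq : ∀ x ∈ Ioo (0 : ℝ) 1, A * ₂F₁ α β c (1 - x) = B * ₂F₁ α₁ β₁ c₁ x :=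
    fun x hx ↦ by
      rw [← eq_F _ (one_sub_mem_Ioo hx), ← eq_F₁ x hx, sub_sub_cancel, h x hx]
  obtain ⟨hβ, hβ₁⟩ := eq_zero_of_reflected_eq hA hB hα hαc hα₁ hαc₁ regular_eq
  exact and_assoc.1 ⟨zero_imp hβ, zero_imp₁ hβ₁⟩

end Rigidity

section Normalization

theorem Gamma_add_natCast {s : ℝ} (hs : 0 < s) (n : ℕ) :
    Gamma (s + n) = (ascPochhammer ℝ n).eval s * Gamma s := by
  induction n with
  | zero => simp
  | succ n ih =>
    rw [Nat.cast_succ, ← add_assoc, Gamma_add_one (by positivity), ih, ascPochhammer_succ_eval]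
    ring

theorem beta_add_natCast {p q : ℝ} (hp : 0 < p) (hq : 0 < q) (n : ℕ) :
    beta (p + n) q =
      beta p q * ((ascPochhammer ℝ n).eval p / (ascPochhammer ℝ n).eval (p + q)) := by
  rw [beta, add_right_comm, Gamma_add_natCast hp, Gamma_add_natCast (add_pos hp hq), beta]
  ring

theorem poch_eq_ascPochhammer_eval (s : ℝ) (n : ℕ) : poch s n = (ascPochhammer ℝ n).eval s :=
  (ascPochhammer_eval_eq_prod s n).symm

theorem F21_eq_ordinaryHypergeometric (a b c x : ℝ) : F21 a b c x = ₂F₁ a b c x := by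
  simp only [F21, poch_eq_ascPochhammer_eval, ordinaryHypergeometric_eq_tsum, smul_eq_mul]
  refine tsum_congr fun n ↦ ?_
  ring

theorem summable_ordinaryHypergeometricCoefficient_mul_div {a b c p q : ℝ} (ha : 0 < a)
    (hb : 0 < b) (hc : 0 < c) (hp : 0 < p) (hq : 0 < q) (h : a + b - c < q) :
    Summable fun n ↦ ordinaryHypergeometricCoefficient a b c n *
      ((ascPochhammer ℝ n).eval p / (ascPochhammer ℝ n).eval (p + q)) := by
  have Gamma_ne_zero {s : ℝ} (hs : 0 < s) : Gamma s ≠ 0 := (Gamma_pos_of_pos hs).ne'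
  have equiv := (ordinaryHypergeometricCoefficient_isEquivalent (Gamma_ne_zero ha)
    (Gamma_ne_zero hb) (Gamma_ne_zero hc)).mul
    ((ascPochhammer_eval_isEquivalent (Gamma_ne_zero hp)).div
      (ascPochhammer_eval_isEquivalent (Gamma_ne_zero (add_pos hp hq))))
  have summable_rpow : Summable fun n : ℕ ↦ (n : ℝ) ^ (a + b - c - q - 1) :=
    summable_nat_rpow.2 (by linarith)
  refine summable_of_isBigO_nat (summable_rpow.mul_left
    (Gamma c / (Gamma a * Gamma b) * (Gamma (p + q) / Gamma p))) ?_
  refine equiv.isBigO.trans_eventuallyEq ?_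
  filter_upwards [eventually_gt_atTop 0] with n hn
  have hn' : (0 : ℝ) < n := Nat.cast_pos.2 hn
  have rpow_split : (n : ℝ) ^ (a + b - c - q - 1) =
      n ^ (a + b - c - 1) * (n ^ (p - 1) / n ^ (p + q - 1)) := by
    rw [← rpow_sub hn', ← rpow_add hn']
    ring_nf
  simp only [Pi.mul_apply, Pi.div_apply, rpow_split]
  field_simp [Gamma_ne_zero hp, Gamma_ne_zero (add_pos hp hq)]

theorem hasSum_F32one {a b c p q : ℝ} (ha : 0 < a) (hb : 0 < b) (hc : 0 < c) (hp : 0 < p)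
    (hq : 0 < q) (h : a + b - c < q) :
    HasSum (fun n ↦ ordinaryHypergeometricCoefficient a b c n *
        ((ascPochhammer ℝ n).eval p / (ascPochhammer ℝ n).eval (p + q)))
      (F32one p a b (p + q) c) := by
  convert (summable_ordinaryHypergeometricCoefficient_mul_div ha hb hc hp hq h).hasSum using 1
  simp only [F32one, poch_eq_ascPochhammer_eval]
  refine tsum_congr fun n ↦ ?_
  rw [ordinaryHypergeometricCoefficient]
  ring

theorem ordinaryHypergeometricCoefficient_mul_div_pos {a b c p q : ℝ} (ha : 0 < a) (hb : 0 < b)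
    (hc : 0 < c) (hp : 0 < p) (hq : 0 < q) (n : ℕ) :
    0 < ordinaryHypergeometricCoefficient a b c n *
      ((ascPochhammer ℝ n).eval p / (ascPochhammer ℝ n).eval (p + q)) :=
  mul_pos (ordinaryHypergeometricCoefficient_pos ha hb hc n)
    (div_pos (ascPochhammer_pos n p hp) (ascPochhammer_pos n (p + q) (add_pos hp hq)))

theorem F32one_pos {a b c p q : ℝ} (ha : 0 < a) (hb : 0 < b) (hc : 0 < c) (hp : 0 < p)
    (hq : 0 < q) (h : a + b - c < q) : 0 < F32one p a b (p + q) c := by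
  have sum := hasSum_F32one ha hb hc hp hq h
  have term_pos := ordinaryHypergeometricCoefficient_mul_div_pos ha hb hc hp hq
  exact sum.tsum_eq ▸ sum.summable.tsum_pos (fun n ↦ (term_pos n).le) 0 (term_pos 0)

theorem Cbh_pos {a a' b : ℝ} (ha : 0 < a) (ha' : 0 < a') (hb : 0 < b) : 0 < Cbh a a' b := by
  have := F32one_pos ha hb (add_pos ha ha') ha hb (by linarith)
  have := Gamma_pos_of_pos ha
  have := Gamma_pos_of_pos hb
  have := Gamma_pos_of_pos (add_pos ha hb)
  unfold Cbh
  positivity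

theorem lintegral_rpow_mul_one_sub_rpow {p q : ℝ} (hp : 0 < p) (hq : 0 < q) :
    ∫⁻ x in Ioo 0 1, ENNReal.ofReal (x ^ (p - 1) * (1 - x) ^ (q - 1)) =
      ENNReal.ofReal (beta p q) := by
  have beta_pos := beta_pos hp hq
  have normalized := lintegral_betaPDF_eq_one hp hq
  simp only [lintegral_betaPDF, mul_assoc,
    ENNReal.ofReal_mul (one_div_nonneg.2 beta_pos.le)] at normalized
  rw [lintegral_const_mul _ (by fun_prop)] at normalized
  calc ∫⁻ x in Ioo 0 1, ENNReal.ofReal (x ^ (p - 1) * (1 - x) ^ (q - 1))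
      = ENNReal.ofReal (beta p q) * (ENNReal.ofReal (1 / beta p q) *
          ∫⁻ x in Ioo 0 1, ENNReal.ofReal (x ^ (p - 1) * (1 - x) ^ (q - 1))) := by
        rw [← mul_assoc, ← ENNReal.ofReal_mul beta_pos.le, mul_one_div_cancel beta_pos.ne',
          ENNReal.ofReal_one, one_mul]
    _ = ENNReal.ofReal (beta p q) := by rw [normalized, mul_one]

theorem hasSum_rpow_mul_ordinaryHypergeometric (a b c p q : ℝ) {x : ℝ} (hx : x ∈ Ioo 0 1) :
    HasSum (fun n : ℕ ↦
        ordinaryHypergeometricCoefficient a b c n * (x ^ (p + n - 1) * (1 - x) ^ (q - 1)))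
      (x ^ (p - 1) * (1 - x) ^ (q - 1) * ₂F₁ a b c x) := by
  refine ((hasSum_ordinaryHypergeometric a b c (norm_lt_one_of_mem_Ico
    (Ioo_subset_Ico_self hx))).mul_left (x ^ (p - 1) * (1 - x) ^ (q - 1))).congr_fun fun n ↦ ?_
  rw [add_sub_right_comm, rpow_add_natCast hx.1.ne']
  ring

theorem lintegral_rpow_mul_ordinaryHypergeometric {a b c p q : ℝ} (ha : 0 < a) (hb : 0 < b)
    (hc : 0 < c) (hp : 0 < p) (hq : 0 < q) (h : a + b - c < q) :
    ∫⁻ x in Ioo 0 1, ENNReal.ofReal (x ^ (p - 1) * (1 - x) ^ (q - 1) * ₂F₁ a b c x) =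
      ENNReal.ofReal (beta p q * F32one p a b (p + q) c) := by
  have coeff_nonneg (n : ℕ) := (ordinaryHypergeometricCoefficient_pos ha hb hc n).le
  have lintegral_term (n : ℕ) :
      ∫⁻ x in Ioo 0 1, ENNReal.ofReal
        (ordinaryHypergeometricCoefficient a b c n * (x ^ (p + n - 1) * (1 - x) ^ (q - 1))) =
      ENNReal.ofReal (beta p q * (ordinaryHypergeometricCoefficient a b c n *
        ((ascPochhammer ℝ n).eval p / (ascPochhammer ℝ n).eval (p + q)))) := by
    simp only [ENNReal.ofReal_mul (coeff_nonneg n)]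
    rw [lintegral_const_mul _ (by fun_prop), lintegral_rpow_mul_one_sub_rpow (by positivity) hq,
      ← ENNReal.ofReal_mul (coeff_nonneg n), beta_add_natCast hp hq, mul_left_comm]
  have integrand_eq {x : ℝ} (hx : x ∈ Ioo 0 1) :
      ENNReal.ofReal (x ^ (p - 1) * (1 - x) ^ (q - 1) * ₂F₁ a b c x) = ∑' n, ENNReal.ofReal
        (ordinaryHypergeometricCoefficient a b c n * (x ^ (p + n - 1) * (1 - x) ^ (q - 1))) := by
    have sum := hasSum_rpow_mul_ordinaryHypergeometric a b c p q hx
    rw [← sum.tsum_eq, ENNReal.ofReal_tsum_of_nonneg _ sum.summable]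
    exact fun n ↦ mul_nonneg (coeff_nonneg n) <|
      mul_nonneg (rpow_nonneg hx.1.le _) (rpow_nonneg (sub_nonneg.2 hx.2.le) _)
  have sum := (hasSum_F32one ha hb hc hp hq h).mul_left (beta p q)
  rw [setLIntegral_congr_fun measurableSet_Ioo fun x hx ↦ integrand_eq hx,
    lintegral_tsum fun n ↦ by fun_prop, tsum_congr lintegral_term, ← sum.tsum_eq,
    ENNReal.ofReal_tsum_of_nonneg _ sum.summable]
  exact fun n ↦ mul_nonneg (beta_pos hp hq).le
    (ordinaryHypergeometricCoefficient_mul_div_pos ha hb hc hp hq n).le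

theorem beta_mul_F32one_eq_beta {a a' : ℝ} (ha : 0 < a) (ha' : 0 < a') :
    beta a (a + a') * F32one a a (a + a') (a + (a + a')) (a + a') = beta a a' := by
  have hc : 0 < a + a' := add_pos ha ha'
  have h : a + (a + a') - (a + a') < a + a' := by linarith
  have euler := lintegral_rpow_mul_ordinaryHypergeometric ha hc hc ha hc h
  rw [← ENNReal.ofReal_eq_ofReal_iff (mul_pos (beta_pos ha hc) (F32one_pos ha hc hc ha hc h)).le
    (beta_pos ha ha').le, ← euler, ← lintegral_rpow_mul_one_sub_rpow ha ha']
  refine setLIntegral_congr_fun measurableSet_Ioo fun x hx ↦ ?_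
  rw [ordinaryHypergeometric_self_right a (natCast_ne_neg_of_pos hc)
    (norm_lt_one_of_mem_Ico (Ioo_subset_Ico_self hx)), mul_assoc, ← rpow_add (sub_pos.2 hx.2)]
  ring_nf

theorem Cbh_add_self {a a' : ℝ} (ha : 0 < a) (ha' : 0 < a') :
    Cbh a a' (a + a') = 1 / beta a a' := by
  rw [← beta_mul_F32one_eq_beta ha ha', Cbh, beta, one_div, div_mul_eq_mul_div, inv_div]

end Normalization

section Densities

theorem map_sub_left_withDensity {G : Type*} [AddCommGroup G] [MeasurableSpace G]
    [MeasurableAdd G] [MeasurableNeg G] (μ : Measure G) [μ.IsAddLeftInvariant] [μ.IsNegInvariant]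
    (g : G) {f : G → ENNReal} (hf : Measurable f) :
    (μ.withDensity f).map (fun x ↦ g - x) = μ.withDensity fun x ↦ f (g - x) := by
  have preserving := Measure.measurePreserving_sub_left μ g
  ext s hs
  rw [Measure.map_apply preserving.measurable hs, withDensity_apply _ (preserving.measurable hs),
    withDensity_apply _ hs]
  simpa only [Function.comp_def, sub_sub_cancel] using
    preserving.setLIntegral_comp_preimage hs (hf.comp preserving.measurable)

theorem eqOn_of_withDensity_ofReal_eq {α : Type*} [TopologicalSpace α] [MeasurableSpace α]
    [OpensMeasurableSpace α] {μ : Measure α} [SigmaFinite μ] [μ.IsOpenPosMeasure] {f g : α → ℝ}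
    {U : Set α} (hU : IsOpen U) (hf : Measurable f) (hg : Measurable g)
    (f_nonneg : ∀ x ∈ U, 0 ≤ f x) (g_nonneg : ∀ x ∈ U, 0 ≤ g x)
    (f_cont : ContinuousOn f U) (g_cont : ContinuousOn g U)
    (h : μ.withDensity (fun x ↦ ENNReal.ofReal (f x)) =
      μ.withDensity fun x ↦ ENNReal.ofReal (g x)) : EqOn f g U := by
  rw [withDensity_eq_iff_of_sigmaFinite hf.ennreal_ofReal.aemeasurable
    hg.ennreal_ofReal.aemeasurable] at h
  refine Measure.eqOn_open_of_ae_eq (μ := μ) ?_ hU f_cont g_cont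
  filter_upwards [ae_restrict_mem hU.measurableSet, ae_restrict_of_ae h] with x hx hfg
  exact (ENNReal.ofReal_eq_ofReal_iff (f_nonneg x hx) (g_nonneg x hx)).1 hfg

variable {a a' b a₁ a₁' b₁ : ℝ}

theorem bhDens_of_mem_Ioo (a a' b : ℝ) {x : ℝ} (hx : x ∈ Ioo 0 1) :
    bhDens a a' b x = Cbh a a' b * x ^ (a - 1) * (1 - x) ^ (b - 1) * ₂F₁ a b (a + a') x := by
  rw [← F21_eq_ordinaryHypergeometric]
  exact if_pos hx

theorem continuousOn_bhDens (a a' b : ℝ) : ContinuousOn (bhDens a a' b) (Ioo 0 1) := by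
  refine ContinuousOn.congr ?_ fun x hx ↦ bhDens_of_mem_Ioo a a' b hx
  refine ((continuousOn_const.mul (continuousOn_id.rpow_const fun x hx ↦ .inl hx.1.ne')).mul
    ((continuousOn_const.sub continuousOn_id).rpow_const fun x hx ↦ .inl (sub_pos.2 hx.2).ne')).mul
    ((continuousOn_ordinaryHypergeometric _ _ _).mono Ioo_subset_Ico_self)

theorem measurable_bhDens (a a' b : ℝ) : Measurable (bhDens a a' b) := by
  classical
  have := (continuousOn_bhDens a a' b).measurable_piecewise
    (continuousOn_const (c := (0 : ℝ))) measurableSet_Ioo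
  convert this using 1
  ext x
  by_cases hx : x ∈ Ioo (0 : ℝ) 1
  · rw [piecewise_eq_of_mem _ _ _ hx]
  · rw [piecewise_eq_of_notMem _ _ _ hx]
    exact if_neg hx

theorem bhDens_nonneg (ha : 0 < a) (ha' : 0 < a') (hb : 0 < b) {x : ℝ} (hx : x ∈ Ioo 0 1) :
    0 ≤ bhDens a a' b x := by
  have := Cbh_pos ha ha' hb
  have := rpow_pos_of_pos hx.1 (a - 1)
  have := rpow_pos_of_pos (sub_pos.2 hx.2) (b - 1)
  have := one_pos.trans_le
    (one_le_ordinaryHypergeometric ha hb (add_pos ha ha') (Ioo_subset_Ico_self hx))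
  rw [bhDens_of_mem_Ioo a a' b hx]
  positivity

theorem map_one_sub_bhMeasure (a a' b : ℝ) : (bhMeasure a a' b).map (fun x ↦ 1 - x) =
    volume.withDensity fun x ↦ ENNReal.ofReal (bhDens a a' b (1 - x)) :=
  map_sub_left_withDensity volume 1 (measurable_bhDens a a' b).ennreal_ofReal

theorem bhDens_one_sub_eq_of_map_one_sub_eq (ha : 0 < a) (ha' : 0 < a') (hb : 0 < b) (ha₁ : 0 < a₁)
    (ha₁' : 0 < a₁') (hb₁ : 0 < b₁)
    (h : (bhMeasure a a' b).map (fun x ↦ 1 - x) = bhMeasure a₁ a₁' b₁) :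
    ∀ x ∈ Ioo (0 : ℝ) 1, bhDens a a' b (1 - x) = bhDens a₁ a₁' b₁ x := by
  rw [map_one_sub_bhMeasure, bhMeasure] at h
  exact eqOn_of_withDensity_ofReal_eq isOpen_Ioo
    ((measurable_bhDens a a' b).comp (measurable_const.sub measurable_id))
    (measurable_bhDens a₁ a₁' b₁) (fun x hx ↦ bhDens_nonneg ha ha' hb (one_sub_mem_Ioo hx))
    (fun x hx ↦ bhDens_nonneg ha₁ ha₁' hb₁ hx)
    ((continuousOn_bhDens a a' b).comp (by fun_prop) fun x hx ↦ one_sub_mem_Ioo hx)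
    (continuousOn_bhDens a₁ a₁' b₁) h

theorem eq_of_bhDens_one_sub_eq (ha : 0 < a) (ha' : 0 < a') (hb : 0 < b) (ha₁ : 0 < a₁)
    (ha₁' : 0 < a₁') (hb₁ : 0 < b₁)
    (h : ∀ x ∈ Ioo (0 : ℝ) 1, bhDens a a' b (1 - x) = bhDens a₁ a₁' b₁ x) :
    a₁ = a' ∧ a₁' = a ∧ b = a + a' ∧ b₁ = a + a' := by
  have divided_eq : ∀ x ∈ Ioo (0 : ℝ) 1,
      Cbh a a' b * (₂F₁ a b (a + a') (1 - x) * x ^ (b - a₁)) =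
        Cbh a₁ a₁' b₁ * (₂F₁ a₁ b₁ (a₁ + a₁') x * (1 - x) ^ (b₁ - a)) := by
    intro x hx
    have hx' : 0 < 1 - x := sub_pos.2 hx.2
    have density_eq := h x hx
    rw [bhDens_of_mem_Ioo a a' b (one_sub_mem_Ioo hx), bhDens_of_mem_Ioo a₁ a₁' b₁ hx,
      sub_sub_cancel] at density_eq
    rw [← sub_sub_sub_cancel_right b a₁ 1, ← sub_sub_sub_cancel_right b₁ a 1, rpow_sub hx.1 (b - 1),
      rpow_sub hx' (b₁ - 1)]
    have := (rpow_pos_of_pos hx.1 (a₁ - 1)).ne'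
    have := (rpow_pos_of_pos hx' (a - 1)).ne'
    field_simp
    linear_combination density_eq
  obtain ⟨hb_eq, ht, hb₁_eq, hs⟩ := eq_of_reflected_mul_rpow_eq (Cbh_pos ha ha' hb)
    (Cbh_pos ha₁ ha₁' hb₁) ha (lt_add_of_pos_right a ha') hb ha₁ (lt_add_of_pos_right a₁ ha₁') hb₁
    divided_eq
  refine ⟨?_, ?_, ?_, ?_⟩ <;> linarith

theorem bhMeasure_add_self (ha : 0 < a) (ha' : 0 < a') :
    bhMeasure a a' (a + a') = betaMeasure a a' := by
  rw [bhMeasure, betaMeasure]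
  congr 1 with x
  rw [betaPDF_eq]
  congr 1
  by_cases hx : 0 < x ∧ x < 1
  · rw [bhDens_of_mem_Ioo _ _ _ hx, if_pos hx, Cbh_add_self ha ha',
      ordinaryHypergeometric_self_right a (natCast_ne_neg_of_pos (add_pos ha ha'))
        (norm_lt_one_of_mem_Ico (Ioo_subset_Ico_self hx)), mul_assoc, ← rpow_add (sub_pos.2 hx.2)]
    ring_nf
  · rw [bhDens, if_neg hx, if_neg hx]

theorem betaPDF_one_sub (p q x : ℝ) : betaPDF p q (1 - x) = betaPDF q p x := by
  have beta_symm : beta p q = beta q p := by rw [beta, beta, add_comm, mul_comm (Gamma p)]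
  simp only [betaPDF_eq, beta_symm, sub_sub_cancel, sub_pos, sub_lt_self_iff]
  simp only [and_comm, mul_right_comm]

theorem map_one_sub_betaMeasure (p q : ℝ) :
    (betaMeasure p q).map (fun x ↦ 1 - x) = betaMeasure q p := by
  have measurable_betaPDF : Measurable (betaPDF p q) :=
    (measurable_betaPDFReal p q).ennreal_ofReal
  rw [betaMeasure, map_sub_left_withDensity volume 1 measurable_betaPDF]
  simp only [betaPDF_one_sub, betaMeasure]

theorem map_one_sub_bhMeasure_eq_iff (ha : 0 < a) (ha' : 0 < a') (hb : 0 < b) (ha₁ : 0 < a₁)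
    (ha₁' : 0 < a₁') (hb₁ : 0 < b₁) :
    (bhMeasure a a' b).map (fun x ↦ 1 - x) = bhMeasure a₁ a₁' b₁ ↔
      a₁ = a' ∧ a₁' = a ∧ b = a + a' ∧ b₁ = a + a' := by
  refine ⟨fun h ↦ eq_of_bhDens_one_sub_eq ha ha' hb ha₁ ha₁' hb₁
    (bhDens_one_sub_eq_of_map_one_sub_eq ha ha' hb ha₁ ha₁' hb₁ h), ?_⟩
  rintro ⟨rfl, rfl, rfl, rfl⟩
  rw [bhMeasure_add_self ha ha', map_one_sub_betaMeasure, add_comm, bhMeasure_add_self ha' ha]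

end Densities

theorem bh_one_sub {Ω : Type*} [MeasurableSpace Ω] (μ : Measure Ω)
    [IsProbabilityMeasure μ] (X : Ω → ℝ) (hX : Measurable X)
    (a a' b a1 a1' b1 : ℝ)
    (ha : 0 < a) (ha' : 0 < a') (hb : 0 < b)
    (ha1 : 0 < a1) (ha1' : 0 < a1') (hb1 : 0 < b1)
    (hXlaw : μ.map X = bhMeasure a a' b) :
    μ.map (fun ω => 1 - X ω) = bhMeasure a1 a1' b1 ↔
      a1 = a' ∧ a1' = a ∧ b = a + a' ∧ b1 = a + a' := by
  have map_eq : μ.map (fun ω => 1 - X ω) = (bhMeasure a a' b).map (fun x ↦ 1 - x) := by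
    rw [← hXlaw, Measure.map_map (by fun_prop) hX, Function.comp_def]
  rw [map_eq, map_one_sub_bhMeasure_eq_iff ha ha' hb ha1 ha1' hb1]
end

section
/- Let a' , b > 0 be fixed. As a' → ∞, the real beta-hypergeometric distributions μ_{a,a',b} converge weakly to the Beta distribution of the first kind β¹_{a,b}; and as b → ∞ with a' < a, μ_{a,a',b} converges weakly to β¹_{a−a',a'}. -/
open MeasureTheory ProbabilityTheory Real Set Filter Topology

namespace BetaHypergeometric

/-! Both limits come from the fact that `β¹_{p,q}` concentrates at `0` as `q → ∞`.

Euler's integral is `₂F₁(a,b;a+a';x) = E[(1 - x T)^(-b)]` with `T ∼ β¹_{a,a'}`, and it tends to `1`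
as `a' → ∞`, so only the Beta factor of the density of `μ_{a,a',b}` survives.

For `a' < a`, let `Z ∼ β¹_{a-a',a'}` and `Y ∼ β¹_{a',b}` be independent and put
`X = Z + (1 - Z) Y`. Substituting Euler's integral shows that `μ_{a,a',b}` is, up to normalization,
the law of `X` weighted by `(Z / X)^a' ∈ (0, 1]`. As `b → ∞` we have `Y → 0`, hence `X → Z` and the
weight tends to `1`. -/

section Pochhammer

lemma poch_pos {a : ℝ} (ha : 0 < a) (n : ℕ) : 0 < poch a n :=
  Finset.prod_pos fun i _ => by positivity

lemma poch_le_poch {a c : ℝ} (ha : 0 < a) (hac : a ≤ c) (n : ℕ) : poch a n ≤ poch c n :=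
  Finset.prod_le_prod (fun i _ => by positivity) fun i _ => by linarith

lemma poch_succ (a : ℝ) (n : ℕ) : poch a (n + 1) = poch a n * (a + n) :=
  Finset.prod_range_succ _ _

lemma eval_ascPochhammer (a : ℝ) (n : ℕ) : (ascPochhammer ℝ n).eval a = poch a n := by
  induction n with
  | zero => simp [poch]
  | succ n ih => simp [ascPochhammer_succ_right, poch_succ, ih]

lemma Gamma_add_natCast {a : ℝ} (ha : 0 < a) (n : ℕ) :
    Gamma (a + n) = poch a n * Gamma a := by
  induction n with
  | zero => simp [poch]
  | succ n ih =>
    have han : a + (n : ℝ) ≠ 0 := by positivity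
    rw [Nat.cast_succ, ← add_assoc, Gamma_add_one han, ih, poch_succ]
    ring

lemma beta_add_natCast {p q : ℝ} (hp : 0 < p) (hq : 0 < q) (n : ℕ) :
    ProbabilityTheory.beta (p + n) q
      = poch p n / poch (p + q) n * ProbabilityTheory.beta p q := by
  have hpq : 0 < p + q := add_pos hp hq
  have hpoch := (poch_pos hpq n).ne'
  have hGamma := (Gamma_pos_of_pos hpq).ne'
  rw [ProbabilityTheory.beta, ProbabilityTheory.beta, add_right_comm, Gamma_add_natCast hp,
    Gamma_add_natCast hpq]
  field_simp

lemma choose_add_sub_one (b : ℝ) (n : ℕ) :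
    Ring.choose (b + n - 1) n = poch b n / n.factorial := by
  have h := Ring.factorial_nsmul_multichoose_eq_ascPochhammer b n
  rw [Polynomial.ascPochhammer_smeval_eq_eval, eval_ascPochhammer, nsmul_eq_mul] at h
  have hn : (n.factorial : ℝ) ≠ 0 := by positivity
  rw [Ring.choose, eq_div_iff hn, ← h, mul_comm]
  congr 2
  ring

lemma hasSum_one_sub_rpow_neg (b : ℝ) {y : ℝ} (hy : |y| < 1) :
    HasSum (fun n : ℕ => poch b n / n.factorial * y ^ n) ((1 - y) ^ (-b)) := by
  have hmem : y ∈ Metric.eball (0 : ℝ) 1 := by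
    rwa [Metric.mem_eball, edist_zero_right, ← ofReal_norm, norm_eq_abs, ENNReal.ofReal_lt_one]
  have hnonneg : 0 ≤ 1 - y := by linarith [(abs_lt.1 hy).2]
  rw [rpow_neg hnonneg]
  simpa [FormalMultilinearSeries.ofScalars, choose_add_sub_one] using
    (one_div_one_sub_rpow_hasFPowerSeriesOnBall_zero b).hasSum hmem

lemma poch_succ_eq_div_GammaSeq {a : ℝ} (ha : 0 < a) {n : ℕ} (hn : n ≠ 0) :
    poch a (n + 1) = (n : ℝ) ^ a * n.factorial / GammaSeq a n := by
  have hpoch := (poch_pos ha (n + 1)).ne'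
  have hpow : (n : ℝ) ^ a ≠ 0 := by positivity
  have hfact : (n.factorial : ℝ) ≠ 0 := by positivity
  rw [GammaSeq, ← poch]
  field_simp

/-- The terms decay like `n ^ (a₁ + a₂ + a₃ - b₁ - b₂ - 1)`, by Euler's limit formula for `Γ`. -/
lemma summable_F32one {a₁ a₂ a₃ b₁ b₂ : ℝ} (ha₁ : 0 < a₁) (ha₂ : 0 < a₂) (ha₃ : 0 < a₃)
    (hb₁ : 0 < b₁) (hb₂ : 0 < b₂) (h : a₁ + a₂ + a₃ < b₁ + b₂) :
    Summable fun n : ℕ =>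
      poch a₁ n * poch a₂ n * poch a₃ n / ((n.factorial : ℝ) * poch b₁ n * poch b₂ n) := by
  rw [← summable_nat_add_iff 1]
  let G : ℕ → ℝ := fun n =>
    GammaSeq b₁ n * GammaSeq b₂ n / (GammaSeq a₁ n * GammaSeq a₂ n * GammaSeq a₃ n)
  have hGamma {s : ℝ} (hs : 0 < s) := (Gamma_pos_of_pos hs).ne'
  have hG : G =O[atTop] fun _ => (1 : ℝ) :=
    (((GammaSeq_tendsto_Gamma b₁).mul (GammaSeq_tendsto_Gamma b₂)).div
      (((GammaSeq_tendsto_Gamma a₁).mul (GammaSeq_tendsto_Gamma a₂)).mul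
        (GammaSeq_tendsto_Gamma a₃))
      (mul_ne_zero (mul_ne_zero (hGamma ha₁) (hGamma ha₂)) (hGamma ha₃))).isBigO_one ℝ
  let r : ℕ → ℝ := fun n => (n : ℝ) ^ (a₁ + a₂ + a₃ - b₁ - b₂) / (n + 1)
  have hr : r =O[atTop] fun n : ℕ => (n : ℝ) ^ (a₁ + a₂ + a₃ - b₁ - b₂ - 1) := by
    refine Asymptotics.IsBigO.of_bound 1 ?_
    filter_upwards [eventually_gt_atTop 0] with n hn
    have hn' : (0 : ℝ) < n := Nat.cast_pos.2 hn
    rw [one_mul, norm_of_nonneg (by positivity), norm_of_nonneg (by positivity),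
      rpow_sub_one hn'.ne']
    exact div_le_div_of_nonneg_left (by positivity) hn' (le_add_of_nonneg_right zero_le_one)
  have hsum : Summable fun n : ℕ => (n : ℝ) ^ (a₁ + a₂ + a₃ - b₁ - b₂ - 1) :=
    summable_nat_rpow.2 (by linarith)
  refine summable_of_isBigO_nat hsum ((hG.mul hr).congr' ?_ ?_)
  · filter_upwards [eventually_ne_atTop 0] with n hn
    have hn' : (0 : ℝ) < n := by positivity
    simp only [G, r, poch_succ_eq_div_GammaSeq ha₁ hn, poch_succ_eq_div_GammaSeq ha₂ hn,
      poch_succ_eq_div_GammaSeq ha₃ hn, poch_succ_eq_div_GammaSeq hb₁ hn,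
      poch_succ_eq_div_GammaSeq hb₂ hn, rpow_sub hn', rpow_add hn', Nat.factorial_succ]
    push_cast
    field_simp
  · simp only [one_mul, EventuallyEq.rfl]

end Pochhammer

section BetaMeasure

lemma beta1_eq_betaMeasure (p q : ℝ) : beta1 p q = betaMeasure p q := by
  have hdens : beta1Dens p q = betaPDFReal p q := by
    funext x
    rw [beta1Dens, betaPDFReal, ProbabilityTheory.beta, one_div_div]
  rw [beta1, hdens]
  rfl

lemma measurable_betaPDF (p q : ℝ) : Measurable (betaPDF p q) :=
  (measurable_betaPDFReal p q).ennreal_ofReal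

lemma betaPDFReal_of_mem {x : ℝ} (p q : ℝ) (hx : x ∈ Ioo (0 : ℝ) 1) :
    betaPDFReal p q x = 1 / ProbabilityTheory.beta p q * x ^ (p - 1) * (1 - x) ^ (q - 1) :=
  if_pos hx

lemma betaPDFReal_of_notMem {x : ℝ} (p q : ℝ) (hx : x ∉ Ioo (0 : ℝ) 1) : betaPDFReal p q x = 0 :=
  if_neg hx

lemma betaPDFReal_nonneg {p q : ℝ} (hp : 0 < p) (hq : 0 < q) (x : ℝ) : 0 ≤ betaPDFReal p q x := by
  by_cases hx : x ∈ Ioo (0 : ℝ) 1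
  · exact (betaPDFReal_pos hx.1 hx.2 hp hq).le
  · exact (betaPDFReal_of_notMem p q hx).ge

lemma ae_mem_Ioo_betaMeasure (p q : ℝ) : ∀ᵐ x ∂betaMeasure p q, x ∈ Ioo (0 : ℝ) 1 := by
  rw [betaMeasure, ae_withDensity_iff (measurable_betaPDF p q)]
  refine ae_of_all _ fun x hx => ?_
  by_contra hmem
  exact hx (by rw [betaPDF, betaPDFReal_of_notMem p q hmem, ENNReal.ofReal_zero])

variable {p q : ℝ}

lemma integral_betaMeasure (hp : 0 < p) (hq : 0 < q) (f : ℝ → ℝ) :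
    ∫ x, f x ∂betaMeasure p q = ∫ x, betaPDFReal p q x * f x := by
  rw [betaMeasure, integral_withDensity_eq_integral_toReal_smul (measurable_betaPDF p q)
    (ae_of_all _ fun _ => ENNReal.ofReal_lt_top)]
  simp only [betaPDF, ENNReal.toReal_ofReal (betaPDFReal_nonneg hp hq _), smul_eq_mul]

lemma integral_betaPDFReal (hp : 0 < p) (hq : 0 < q) : ∫ x, betaPDFReal p q x = 1 := by
  have := isProbabilityMeasureBeta hp hq
  simpa using (integral_betaMeasure hp hq fun _ => 1).symm

lemma integrable_betaMeasure_of_bound (hp : 0 < p) (hq : 0 < q) {f : ℝ → ℝ} {C : ℝ}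
    (hf : Measurable f) (hC : ∀ x ∈ Ioo (0 : ℝ) 1, |f x| ≤ C) :
    Integrable f (betaMeasure p q) := by
  have := isProbabilityMeasureBeta hp hq
  exact .of_bound hf.aestronglyMeasurable C ((ae_mem_Ioo_betaMeasure p q).mono hC)

lemma integral_pow_betaMeasure (hp : 0 < p) (hq : 0 < q) (n : ℕ) :
    ∫ x, x ^ n ∂betaMeasure p q = poch p n / poch (p + q) n := by
  have hpdf (x : ℝ) : betaPDFReal p q x * x ^ n
      = poch p n / poch (p + q) n * betaPDFReal (p + n) q x := by
    by_cases hx : x ∈ Ioo (0 : ℝ) 1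
    · have hpow : x ^ (p + n - 1) = x ^ (p - 1) * x ^ n := by
        rw [← rpow_natCast, ← rpow_add hx.1]
        ring_nf
      have hbeta := (beta_pos hp hq).ne'
      have hpoch₁ := (poch_pos hp n).ne'
      have hpoch₂ := (poch_pos (add_pos hp hq) n).ne'
      rw [betaPDFReal_of_mem _ _ hx, betaPDFReal_of_mem _ _ hx, beta_add_natCast hp hq, hpow]
      field_simp
    · simp only [betaPDFReal_of_notMem _ _ hx, zero_mul, mul_zero]
  simp only [integral_betaMeasure hp hq, hpdf, integral_const_mul,
    integral_betaPDFReal (add_pos_of_pos_of_nonneg hp n.cast_nonneg) hq, mul_one]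

lemma integral_id_betaMeasure (hp : 0 < p) (hq : 0 < q) :
    ∫ x, x ∂betaMeasure p q = p / (p + q) := by
  simpa [poch] using integral_pow_betaMeasure hp hq 1

lemma exists_abs_sub_le_add_mul {ψ : ℝ → ℝ} {l C ε : ℝ} (hC : ∀ y ∈ Ioo (0 : ℝ) 1, |ψ y| ≤ C)
    (hl : Tendsto ψ (𝓝[>] 0) (𝓝 l)) (hε : 0 < ε) :
    ∃ K, ∀ y ∈ Ioo (0 : ℝ) 1, |ψ y - l| ≤ ε + K * y := by
  obtain ⟨δ, hδ, hψδ⟩ := Metric.tendsto_nhdsWithin_nhds.1 hl ε hε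
  refine ⟨(C + |l|) / δ, fun y hy => ?_⟩
  have hC0 : 0 ≤ C + |l| := add_nonneg ((abs_nonneg _).trans (hC y hy)) (abs_nonneg l)
  rcases lt_or_ge y δ with hyδ | hδy
  · have hclose : |ψ y - l| < ε := hψδ hy.1 (by rwa [dist_zero_right, norm_of_nonneg hy.1.le])
    have : 0 ≤ (C + |l|) / δ * y := mul_nonneg (div_nonneg hC0 hδ.le) hy.1.le
    linarith
  · have hK : C + |l| ≤ (C + |l|) / δ * y := by
      rw [div_mul_eq_mul_div, le_div_iff₀ hδ]
      exact mul_le_mul_of_nonneg_left hδy hC0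
    linarith [abs_sub (ψ y) l, hC y hy]

/-- As `q → ∞` the mean `p / (p + q)` tends to `0`, so `β¹_{p,q}` concentrates at `0`. -/
lemma tendsto_integral_betaMeasure_atTop (hp : 0 < p) {ψ : ℝ → ℝ} {l C : ℝ} (hψ : Measurable ψ)
    (hC : ∀ y ∈ Ioo (0 : ℝ) 1, |ψ y| ≤ C) (hl : Tendsto ψ (𝓝[>] 0) (𝓝 l)) :
    Tendsto (fun q => ∫ y, ψ y ∂betaMeasure p q) atTop (𝓝 l) := by
  rw [Metric.tendsto_nhds]
  intro ε hε
  obtain ⟨K, hdev⟩ := exists_abs_sub_le_add_mul hC hl (half_pos hε)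
  have hmean : Tendsto (fun q => K * (p / (p + q))) atTop (𝓝 0) := by
    simpa using (tendsto_const_nhds.div_atTop
      (tendsto_atTop_add_const_left atTop p tendsto_id)).const_mul K
  filter_upwards [eventually_gt_atTop 0, hmean.eventually_lt_const (half_pos hε)] with q hq hsmall
  have := isProbabilityMeasureBeta hp hq
  have hid : Integrable (fun y : ℝ => y) (betaMeasure p q) :=
    integrable_betaMeasure_of_bound hp hq measurable_id fun y hy =>
      (abs_of_pos hy.1).trans_le hy.2.le
  calc dist (∫ y, ψ y ∂betaMeasure p q) l
      = ‖∫ y, (ψ y - l) ∂betaMeasure p q‖ := by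
        rw [integral_sub (integrable_betaMeasure_of_bound hp hq hψ hC) (integrable_const l)]
        simp [dist_eq_norm]
    _ ≤ ∫ y, (ε / 2 + K * y) ∂betaMeasure p q :=
        norm_integral_le_of_norm_le ((integrable_const _).add (hid.const_mul K))
          ((ae_mem_Ioo_betaMeasure p q).mono hdev)
    _ = ε / 2 + K * (p / (p + q)) := by
        rw [integral_add (integrable_const _) (hid.const_mul K), integral_const_mul,
          integral_id_betaMeasure hp hq]
        simp
    _ < ε := by linarith

end BetaMeasure

section Hypergeometric

variable {a a' b c x : ℝ}

lemma hasSum_F21 (ha : 0 < a) (ha' : 0 < a') (b : ℝ) (hx : |x| < 1) :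
    HasSum (fun n : ℕ => poch a n * poch b n / ((n.factorial : ℝ) * poch (a + a') n) * x ^ n)
      (∫ t, (1 - x * t) ^ (-b) ∂betaMeasure a a') := by
  have := isProbabilityMeasureBeta ha ha'
  have hbinom : ∀ᵐ t ∂betaMeasure a a',
      HasSum (fun n : ℕ => poch b n / n.factorial * (x * t) ^ n) ((1 - x * t) ^ (-b)) := by
    filter_upwards [ae_mem_Ioo_betaMeasure a a'] with t ht
    refine hasSum_one_sub_rpow_neg b ?_
    rw [abs_mul, abs_of_pos ht.1]
    exact (mul_le_of_le_one_right (abs_nonneg x) ht.2.le).trans_lt hx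
  have hbound (n : ℕ) : ∀ᵐ t ∂betaMeasure a a',
      ‖poch b n / n.factorial * (x * t) ^ n‖ ≤ |poch b n / n.factorial * x ^ n| := by
    filter_upwards [ae_mem_Ioo_betaMeasure a a'] with t ht
    rw [mul_pow, ← mul_assoc, norm_mul, norm_eq_abs, norm_of_nonneg (pow_nonneg ht.1.le n)]
    exact mul_le_of_le_one_right (abs_nonneg _) (pow_le_one₀ ht.1.le ht.2.le)
  have hmoment (n : ℕ) : ∫ t, poch b n / n.factorial * (x * t) ^ n ∂betaMeasure a a'
      = poch a n * poch b n / ((n.factorial : ℝ) * poch (a + a') n) * x ^ n := by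
    simp only [mul_pow, ← mul_assoc, integral_const_mul, integral_pow_betaMeasure ha ha']
    ring
  simpa only [hmoment] using hasSum_integral_of_dominated_convergence
    (fun n _ => |poch b n / n.factorial * x ^ n|) (fun n => by fun_prop) hbound
    (ae_of_all _ fun _ => (hasSum_one_sub_rpow_neg b hx).summable.abs) (integrable_const _) hbinom

lemma F21_eq_integral (ha : 0 < a) (ha' : 0 < a') (b : ℝ) (hx : |x| < 1) :
    F21 a b (a + a') x = ∫ t, (1 - x * t) ^ (-b) ∂betaMeasure a a' :=
  (hasSum_F21 ha ha' b hx).tsum_eq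

lemma measurable_F21 (a b c : ℝ) : Measurable (F21 a b c) := by
  unfold F21
  fun_prop

lemma abs_lt_one_of_mem_Ioo (hx : x ∈ Ioo (0 : ℝ) 1) : |x| < 1 := (abs_of_pos hx.1).trans_lt hx.2

lemma F21_pos (ha : 0 < a) (ha' : 0 < a') (hb : 0 < b) (hx : x ∈ Ioo (0 : ℝ) 1) :
    0 < F21 a b (a + a') x := by
  have hterm (n : ℕ) :
      0 < poch a n * poch b n / ((n.factorial : ℝ) * poch (a + a') n) * x ^ n := by
    have := poch_pos ha n
    have := poch_pos hb n
    have := poch_pos (add_pos ha ha') n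
    have := hx.1
    positivity
  exact (hasSum_F21 ha ha' b (abs_lt_one_of_mem_Ioo hx)).summable.tsum_pos
    (fun n => (hterm n).le) 0 (hterm 0)

lemma F21_anti_right {a'' : ℝ} (ha : 0 < a) (ha' : 0 < a') (haa : a' ≤ a'') (hb : 0 < b)
    (hx : x ∈ Ioo (0 : ℝ) 1) : F21 a b (a + a'') x ≤ F21 a b (a + a') x := by
  have hx1 := abs_lt_one_of_mem_Ioo hx
  refine Summable.tsum_le_tsum (fun n => ?_) (hasSum_F21 ha (ha'.trans_le haa) b hx1).summable
    (hasSum_F21 ha ha' b hx1).summable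
  have := poch_pos ha n
  have := poch_pos hb n
  have := poch_pos (add_pos ha ha') n
  have := poch_le_poch (add_pos ha ha') (add_le_add_right haa a) n
  have := hx.1
  gcongr

lemma tendsto_F21_atTop (ha : 0 < a) (hb : 0 < b) (hx : x ∈ Ioo (0 : ℝ) 1) :
    Tendsto (fun a' => F21 a b (a + a') x) atTop (𝓝 1) := by
  have hbound : ∀ t ∈ Ioo (0 : ℝ) 1, |(1 - x * t) ^ (-b)| ≤ (1 - x) ^ (-b) := by
    intro t ht
    have hxt : 1 - x ≤ 1 - x * t := by nlinarith [hx.1, ht.2]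
    have hpos : 0 < 1 - x := sub_pos.2 hx.2
    rw [abs_of_nonneg (rpow_nonneg (hpos.le.trans hxt) _)]
    exact rpow_le_rpow_of_nonpos hpos hxt (neg_nonpos.2 hb.le)
  have hcont : ContinuousAt (fun t : ℝ => (1 - x * t) ^ (-b)) 0 :=
    ContinuousAt.rpow_const (by fun_prop) (.inl (by simp))
  have hlim : Tendsto (fun t : ℝ => (1 - x * t) ^ (-b)) (𝓝[>] 0) (𝓝 1) := by
    simpa using hcont.tendsto.mono_left nhdsWithin_le_nhds
  refine (tendsto_integral_betaMeasure_atTop ha (by fun_prop) hbound hlim).congr' ?_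
  filter_upwards [eventually_gt_atTop 0] with a' ha'
  exact (F21_eq_integral ha ha' b (abs_lt_one_of_mem_Ioo hx)).symm

lemma F32one_pos {a₁ a₂ a₃ b₁ b₂ : ℝ} (ha₁ : 0 < a₁) (ha₂ : 0 < a₂) (ha₃ : 0 < a₃)
    (hb₁ : 0 < b₁) (hb₂ : 0 < b₂) (h : a₁ + a₂ + a₃ < b₁ + b₂) :
    0 < F32one a₁ a₂ a₃ b₁ b₂ := by
  have hterm (n : ℕ) : 0 < poch a₁ n * poch a₂ n * poch a₃ n /
      ((n.factorial : ℝ) * poch b₁ n * poch b₂ n) := by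
    have := poch_pos ha₁ n
    have := poch_pos ha₂ n
    have := poch_pos ha₃ n
    have := poch_pos hb₁ n
    have := poch_pos hb₂ n
    positivity
  exact (summable_F32one ha₁ ha₂ ha₃ hb₁ hb₂ h).tsum_pos (fun n => (hterm n).le) 0 (hterm 0)

variable {p q : ℝ}

lemma integral_F21 (ha : 0 < a) (hb : 0 < b) (hc : 0 < c) (hp : 0 < p) (hq : 0 < q)
    (h : a + b < q + c) :
    ∫ x, F21 a b c x ∂betaMeasure p q = F32one a p b (p + q) c := by
  have := isProbabilityMeasureBeta hp hq
  let r : ℕ → ℝ := fun n => poch a n * poch b n / ((n.factorial : ℝ) * poch c n)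
  have hr (n : ℕ) : 0 ≤ r n := by
    have := poch_pos ha n
    have := poch_pos hb n
    have := poch_pos hc n
    positivity
  have hint (n : ℕ) : Integrable (fun x => r n * x ^ n) (betaMeasure p q) := by
    refine (integrable_betaMeasure_of_bound (C := 1) hp hq (by fun_prop) fun x hx => ?_).const_mul _
    rw [abs_of_nonneg (pow_nonneg hx.1.le n)]
    exact pow_le_one₀ hx.1.le hx.2.le
  have hmoment (n : ℕ) : ∫ x, r n * x ^ n ∂betaMeasure p q
      = poch a n * poch p n * poch b n / ((n.factorial : ℝ) * poch (p + q) n * poch c n) := by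
    rw [integral_const_mul, integral_pow_betaMeasure hp hq]
    ring
  have hnorm (n : ℕ) : ∫ x, ‖r n * x ^ n‖ ∂betaMeasure p q = ∫ x, r n * x ^ n ∂betaMeasure p q :=
    integral_congr_ae <| (ae_mem_Ioo_betaMeasure p q).mono fun x hx =>
      norm_of_nonneg (mul_nonneg (hr n) (pow_nonneg hx.1.le n))
  have hsum : Summable fun n => ∫ x, ‖r n * x ^ n‖ ∂betaMeasure p q := by
    simp only [hnorm, hmoment]
    exact summable_F32one ha hp hb (add_pos hp hq) hc (by linarith)
  have hF := hasSum_integral_of_summable_integral_norm hint hsum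
  simp only [hmoment] at hF
  exact hF.tsum_eq.symm

lemma integral_F21_pos (ha : 0 < a) (hb : 0 < b) (hc : 0 < c) (hp : 0 < p) (hq : 0 < q)
    (h : a + b < q + c) : 0 < ∫ x, F21 a b c x ∂betaMeasure p q := by
  rw [integral_F21 ha hb hc hp hq h]
  exact F32one_pos ha hp hb (add_pos hp hq) hc (by linarith)

lemma integrable_F21 (ha : 0 < a) (hb : 0 < b) (hc : 0 < c) (hp : 0 < p) (hq : 0 < q)
    (h : a + b < q + c) : Integrable (F21 a b c) (betaMeasure p q) :=
  .of_integral_ne_zero (integral_F21_pos ha hb hc hp hq h).ne'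

lemma integrable_betaPDFReal_mul_F21 (ha : 0 < a) (hb : 0 < b) (hc : 0 < c) (hp : 0 < p)
    (hq : 0 < q) (h : a + b < q + c) : Integrable fun x => betaPDFReal p q x * F21 a b c x := by
  refine .of_integral_ne_zero ?_
  rw [← integral_betaMeasure hp hq]
  exact (integral_F21_pos ha hb hc hp hq h).ne'

lemma tendsto_integral_mul_F21_atTop (ha : 0 < a) (hb : 0 < b) (hp : 0 < p) (hq : 0 < q)
    {f : ℝ → ℝ} {C : ℝ} (hf : Measurable f) (hC : ∀ x, |f x| ≤ C) :
    Tendsto (fun a' => ∫ x, f x * F21 a b (a + a') x ∂betaMeasure p q) atTop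
      (𝓝 (∫ x, f x ∂betaMeasure p q)) := by
  have hdom : Integrable (fun x => C * F21 a b (a + b) x) (betaMeasure p q) :=
    (integrable_F21 ha hb (add_pos ha hb) hp hq (by linarith)).const_mul C
  refine tendsto_integral_filter_of_dominated_convergence _
    (.of_forall fun a' => (hf.mul (measurable_F21 a b _)).aestronglyMeasurable) ?_ hdom ?_
  · filter_upwards [eventually_ge_atTop b] with a' hba'
    filter_upwards [ae_mem_Ioo_betaMeasure p q] with x hx
    have hF := F21_pos ha (hb.trans_le hba') hb hx
    rw [norm_mul, norm_of_nonneg hF.le]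
    exact mul_le_mul (hC x) (F21_anti_right ha hb hba' hb hx) hF.le ((abs_nonneg _).trans (hC x))
  · filter_upwards [ae_mem_Ioo_betaMeasure p q] with x hx
    simpa using (tendsto_F21_atTop ha hb hx).const_mul (f x)

end Hypergeometric

section Normalization

variable {a a' b : ℝ}

lemma bhDens_eq_betaPDFReal_mul (a a' b x : ℝ) :
    bhDens a a' b x
      = betaPDFReal a b x * F21 a b (a + a') x / F32one a a b (a + b) (a + a') := by
  rw [bhDens, betaPDFReal]
  split_ifs
  · rw [Cbh, ProbabilityTheory.beta, one_div_div, div_mul_eq_div_div]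
    ring
  · simp only [zero_mul, zero_div]

lemma integral_bhMeasure (ha : 0 < a) (ha' : 0 < a') (hb : 0 < b) (f : ℝ → ℝ) :
    ∫ x, f x ∂bhMeasure a a' b
      = (∫ x, f x * F21 a b (a + a') x ∂betaMeasure a b)
        / ∫ x, F21 a b (a + a') x ∂betaMeasure a b := by
  have haa := add_pos ha ha'
  have hF : ∫ x, F21 a b (a + a') x ∂betaMeasure a b = F32one a a b (a + b) (a + a') :=
    integral_F21 ha hb haa ha hb (by linarith)
  have hnonneg (x : ℝ) : 0 ≤ bhDens a a' b x := by
    rw [bhDens_eq_betaPDFReal_mul, ← hF]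
    refine div_nonneg ?_ (integral_F21_pos ha hb haa ha hb (by linarith)).le
    by_cases hx : x ∈ Ioo (0 : ℝ) 1
    · exact mul_nonneg (betaPDFReal_nonneg ha hb x) (F21_pos ha ha' hb hx).le
    · simp only [betaPDFReal_of_notMem _ _ hx, zero_mul, le_refl]
  have hmeas : Measurable (bhDens a a' b) := by
    simp only [funext (bhDens_eq_betaPDFReal_mul a a' b)]
    exact ((measurable_betaPDFReal a b).mul (measurable_F21 a b _)).div_const _
  rw [bhMeasure, integral_withDensity_eq_integral_toReal_smul hmeas.ennreal_ofReal
    (ae_of_all _ fun _ => ENNReal.ofReal_lt_top), integral_betaMeasure ha hb, hF, ← integral_div]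
  congr with x
  rw [ENNReal.toReal_ofReal (hnonneg x), bhDens_eq_betaPDFReal_mul, smul_eq_mul]
  ring

lemma tendsto_integral_bhMeasure_atTop_middle (ha : 0 < a) (hb : 0 < b) {f : ℝ → ℝ} {C : ℝ}
    (hf : Measurable f) (hC : ∀ x, |f x| ≤ C) :
    Tendsto (fun a' => ∫ x, f x ∂bhMeasure a a' b) atTop (𝓝 (∫ x, f x ∂betaMeasure a b)) := by
  have := isProbabilityMeasureBeta ha hb
  have hden := tendsto_integral_mul_F21_atTop ha hb ha hb (f := fun _ => 1) measurable_const
    fun _ => abs_one.le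
  simp only [one_mul, integral_const, probReal_univ, smul_eq_mul, mul_one] at hden
  have hratio := (tendsto_integral_mul_F21_atTop ha hb ha hb hf hC).div hden one_ne_zero
  rw [div_one] at hratio
  refine hratio.congr' ?_
  filter_upwards [eventually_gt_atTop 0] with a' ha'
  exact (integral_bhMeasure ha ha' hb f).symm

end Normalization

section MixedBeta

variable {a a' b x z y : ℝ}

/-- For independent `Z ∼ β¹_{a-a',a'}` and `Y ∼ β¹_{a',b}`, the joint density at `(x, z)` of
`X = Z + (1 - Z) Y` and `Z`, multiplied by the weight `(Z / X) ^ a'`. -/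
noncomputable def mixedBetaDens (a a' b x z : ℝ) : ℝ :=
  betaPDFReal (a - a') a' z * (betaPDFReal a' b ((x - z) / (1 - z)) / (1 - z)) * (z / x) ^ a'

lemma div_one_sub_mem_Ioo_iff (hz : z < 1) :
    (x - z) / (1 - z) ∈ Ioo (0 : ℝ) 1 ↔ z < x ∧ x < 1 := by
  have hz' := sub_pos.2 hz
  rw [mem_Ioo, div_pos_iff_of_pos_right hz', div_lt_one hz', sub_pos, sub_lt_sub_iff_right]

lemma mixedBetaDens_eq_zero (a a' b : ℝ) (h : ¬(0 < z ∧ z < x ∧ x < 1)) :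
    mixedBetaDens a a' b x z = 0 := by
  rw [mixedBetaDens]
  by_cases hz : z ∈ Ioo (0 : ℝ) 1
  · have hy : (x - z) / (1 - z) ∉ Ioo (0 : ℝ) 1 := by
      rw [div_one_sub_mem_Ioo_iff hz.2]
      exact fun hx => h ⟨hz.1, hx⟩
    rw [betaPDFReal_of_notMem _ _ hy, zero_div, mul_zero, zero_mul]
  · rw [betaPDFReal_of_notMem _ _ hz, zero_mul, zero_mul]

lemma mixedBetaDens_of_notMem (a a' b : ℝ) (hx : x ∉ Ioo (0 : ℝ) 1) :
    mixedBetaDens a a' b x = 0 :=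
  funext fun _ => mixedBetaDens_eq_zero _ _ _ fun h => hx ⟨h.1.trans h.2.1, h.2.2⟩

lemma mixedBetaDens_nonneg (ha' : 0 < a') (h : a' < a) (hb : 0 < b) (x z : ℝ) :
    0 ≤ mixedBetaDens a a' b x z := by
  by_cases hxz : 0 < z ∧ z < x ∧ x < 1
  · obtain ⟨hz, hzx, hx⟩ := hxz
    exact mul_nonneg (mul_nonneg (betaPDFReal_nonneg (sub_pos.2 h) ha' z)
      (div_nonneg (betaPDFReal_nonneg ha' hb _) (by linarith)))
      (rpow_nonneg (div_nonneg hz.le (hz.trans hzx).le) _)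
  · exact (mixedBetaDens_eq_zero a a' b hxz).ge

lemma measurable_mixedBetaDens (a a' b : ℝ) :
    Measurable (Function.uncurry (mixedBetaDens a a' b)) := by
  have := measurable_betaPDFReal (a - a') a'
  have := measurable_betaPDFReal a' b
  unfold mixedBetaDens Function.uncurry
  fun_prop

lemma mixedBetaDens_of_lt (hz : 0 < z) (hzx : z < x) (hx : x < 1) :
    mixedBetaDens a a' b x z
      = z ^ (a - 1) * (x - z) ^ (a' - 1) * (1 - x) ^ (b - 1) * (1 - z) ^ (-b) * x ^ (-a')
        / (ProbabilityTheory.beta (a - a') a' * ProbabilityTheory.beta a' b) := by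
  have hz1 : 0 < 1 - z := by linarith
  have hz_pow : z ^ (a - 1) = z ^ (a - a' - 1) * z ^ a' := by
    rw [← rpow_add hz]
    ring_nf
  have hz1_pow : (1 - z) ^ (-b)
      = (1 - z) ^ (a' - 1) / ((1 - z) ^ (a' - 1) * (1 - z) ^ (b - 1) * (1 - z)) := by
    rw [rpow_neg hz1.le, rpow_sub_one hz1.ne' b]
    field_simp
  have hcompl : 1 - (x - z) / (1 - z) = (1 - x) / (1 - z) := by
    field_simp
    ring
  rw [mixedBetaDens, betaPDFReal_of_mem _ _ ⟨hz, hzx.trans hx⟩,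
    betaPDFReal_of_mem _ _ ((div_one_sub_mem_Ioo_iff (hzx.trans hx)).2 ⟨hzx, hx⟩), hcompl,
    div_rpow (by linarith) hz1.le, div_rpow (by linarith) hz1.le,
    div_rpow hz.le (hz.trans hzx).le, rpow_neg (hz.trans hzx).le, hz_pow, hz1_pow]
  field_simp

/-- The constant relating the first marginal of `mixedBetaDens` to the unnormalized
beta-hypergeometric density `betaPDFReal a b x * F21 a b (a + a') x`. -/
noncomputable def mixedBetaConst (a a' b : ℝ) : ℝ :=
  ProbabilityTheory.beta a b * ProbabilityTheory.beta a a'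
    / (ProbabilityTheory.beta (a - a') a' * ProbabilityTheory.beta a' b)

lemma mixedBetaConst_pos (ha' : 0 < a') (h : a' < a) (hb : 0 < b) : 0 < mixedBetaConst a a' b := by
  have ha := ha'.trans h
  exact div_pos (mul_pos (beta_pos ha hb) (beta_pos ha ha'))
    (mul_pos (beta_pos (sub_pos.2 h) ha') (beta_pos ha' hb))

lemma mul_mixedBetaDens_mul (ha' : 0 < a') (h : a' < a) (hb : 0 < b) (hx : x ∈ Ioo (0 : ℝ) 1)
    (t : ℝ) :
    x * mixedBetaDens a a' b x (x * t)
      = mixedBetaConst a a' b * betaPDFReal a b x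
        * (betaPDFReal a a' t * (1 - x * t) ^ (-b)) := by
  by_cases ht : t ∈ Ioo (0 : ℝ) 1
  · have hBab := (beta_pos (ha'.trans h) hb).ne'
    have hBaa' := (beta_pos (ha'.trans h) ha').ne'
    have hxt : x - x * t = x * (1 - t) := by ring
    have hx_pow : x * (x ^ (a - 1) * x ^ (a' - 1) * x ^ (-a')) = x ^ (a - 1) := by
      rw [rpow_sub_one hx.1.ne' a', rpow_neg hx.1.le]
      have := (rpow_pos_of_pos hx.1 a').ne'
      have := hx.1.ne'
      field_simp
    have hconst : 1 / (ProbabilityTheory.beta (a - a') a' * ProbabilityTheory.beta a' b)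
        = mixedBetaConst a a' b * (1 / ProbabilityTheory.beta a b)
          * (1 / ProbabilityTheory.beta a a') := by
      rw [mixedBetaConst]
      field_simp
    rw [mixedBetaDens_of_lt (mul_pos hx.1 ht.1) (mul_lt_of_lt_one_right hx.1 ht.2) hx.2,
      betaPDFReal_of_mem _ _ hx, betaPDFReal_of_mem _ _ ht, hxt, mul_rpow hx.1.le ht.1.le,
      mul_rpow hx.1.le (sub_pos.2 ht.2).le, div_eq_mul_one_div, hconst]
    linear_combination mixedBetaConst a a' b * (1 / ProbabilityTheory.beta a b)
      * (1 / ProbabilityTheory.beta a a') * t ^ (a - 1) * (1 - t) ^ (a' - 1)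
      * (1 - x) ^ (b - 1) * (1 - x * t) ^ (-b) * hx_pow
  · have hxt : ¬(0 < x * t ∧ x * t < x ∧ x < 1) := fun hxt =>
      ht ⟨pos_of_mul_pos_right hxt.1 hx.1.le, (mul_lt_iff_lt_one_right hx.1).1 hxt.2.1⟩
    rw [mixedBetaDens_eq_zero _ _ _ hxt, betaPDFReal_of_notMem _ _ ht]
    ring

lemma integral_mixedBetaDens_right (ha' : 0 < a') (h : a' < a) (hb : 0 < b) (x : ℝ) :
    ∫ z, mixedBetaDens a a' b x z
      = mixedBetaConst a a' b * (betaPDFReal a b x * F21 a b (a + a') x) := by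
  by_cases hx : x ∈ Ioo (0 : ℝ) 1
  · calc ∫ z, mixedBetaDens a a' b x z
        = x * ∫ t, mixedBetaDens a a' b x (x * t) := by
          rw [Measure.integral_comp_mul_left, abs_of_pos (inv_pos.2 hx.1), smul_eq_mul,
            mul_inv_cancel_left₀ hx.1.ne']
      _ = mixedBetaConst a a' b * betaPDFReal a b x
            * ∫ t, betaPDFReal a a' t * (1 - x * t) ^ (-b) := by
          rw [← integral_const_mul, ← integral_const_mul]
          simp only [mul_mixedBetaDens_mul ha' h hb hx]
      _ = mixedBetaConst a a' b * (betaPDFReal a b x * F21 a b (a + a') x) := by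
          rw [F21_eq_integral (ha'.trans h) ha' b (abs_lt_one_of_mem_Ioo hx),
            integral_betaMeasure (ha'.trans h) ha', mul_assoc]
  · simp only [mixedBetaDens_of_notMem _ _ _ hx, betaPDFReal_of_notMem _ _ hx, Pi.zero_apply,
      integral_zero, zero_mul, mul_zero]

/-- The value of `f X * (z / X) ^ a'` at `X = z + (1 - z) y`. -/
noncomputable def weightedMix (f : ℝ → ℝ) (a' z y : ℝ) : ℝ :=
  f (z + (1 - z) * y) * (z / (z + (1 - z) * y)) ^ a'

lemma integral_mul_mixedBetaDens_left (a : ℝ) (ha' : 0 < a') (hb : 0 < b) (f : ℝ → ℝ) (z : ℝ) :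
    ∫ x, f x * mixedBetaDens a a' b x z
      = betaPDFReal (a - a') a' z * ∫ y, weightedMix f a' z y ∂betaMeasure a' b := by
  by_cases hz : z ∈ Ioo (0 : ℝ) 1
  · have hz1 : 0 < 1 - z := sub_pos.2 hz.2
    have hsubst (g : ℝ → ℝ) : ∫ x, g x = ∫ y, (1 - z) * g (z + (1 - z) * y) := by
      rw [integral_const_mul, Measure.integral_comp_mul_left (fun x => g (z + x)),
        integral_add_left_eq_self, abs_of_pos (inv_pos.2 hz1), smul_eq_mul,
        mul_inv_cancel_left₀ hz1.ne']
    rw [hsubst, integral_betaMeasure ha' hb, ← integral_const_mul]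
    congr with y
    rw [mixedBetaDens, weightedMix, add_sub_cancel_left, mul_div_cancel_left₀ y hz1.ne']
    field_simp
  · simp only [mixedBetaDens, betaPDFReal_of_notMem _ _ hz, zero_mul, mul_zero, integral_zero]

lemma integrable_mixedBetaDens (ha' : 0 < a') (h : a' < a) (hb : 0 < b) :
    Integrable (Function.uncurry (mixedBetaDens a a' b)) (volume.prod volume) := by
  have ha := ha'.trans h
  have hright := integral_mixedBetaDens_right ha' h hb
  rw [integrable_prod_iff (measurable_mixedBetaDens a a' b).aestronglyMeasurable]
  refine ⟨ae_of_all _ fun x => ?_, ?_⟩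
  · by_cases hx : x ∈ Ioo (0 : ℝ) 1
    · refine .of_integral_ne_zero (f := mixedBetaDens a a' b x) ?_
      rw [hright]
      exact (mul_pos (mixedBetaConst_pos ha' h hb)
        (mul_pos (betaPDFReal_pos hx.1 hx.2 ha hb) (F21_pos ha ha' hb hx))).ne'
    · simp only [Function.uncurry_apply_pair, mixedBetaDens_of_notMem _ _ _ hx, Pi.zero_apply,
        integrable_fun_zero]
  · simp only [Function.uncurry_apply_pair, norm_of_nonneg (mixedBetaDens_nonneg ha' h hb _ _),
      hright]
    exact (integrable_betaPDFReal_mul_F21 ha hb (add_pos ha ha') ha hb (by linarith)).const_mul _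

/-- Both sides are the integral of `f x * mixedBetaDens a a' b x z`, in the two orders. -/
lemma mixedBetaConst_mul_integral_mul_F21 (ha' : 0 < a') (h : a' < a) (hb : 0 < b)
    {f : ℝ → ℝ} {C : ℝ} (hf : Measurable f) (hC : ∀ x, |f x| ≤ C) :
    mixedBetaConst a a' b * ∫ x, f x * F21 a b (a + a') x ∂betaMeasure a b
      = ∫ z, ∫ y, weightedMix f a' z y ∂betaMeasure a' b ∂betaMeasure (a - a') a' := by
  have hf_fst : Measurable fun w : ℝ × ℝ => f w.1 := hf.comp measurable_fst
  have hint : Integrable (Function.uncurry fun x z => f x * mixedBetaDens a a' b x z)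
      (volume.prod volume) :=
    (integrable_mixedBetaDens ha' h hb).bdd_mul hf_fst.aestronglyMeasurable
      (ae_of_all _ fun w => hC w.1)
  calc mixedBetaConst a a' b * ∫ x, f x * F21 a b (a + a') x ∂betaMeasure a b
      = ∫ x, ∫ z, f x * mixedBetaDens a a' b x z := by
        simp only [integral_betaMeasure (ha'.trans h) hb, integral_const_mul,
          integral_mixedBetaDens_right ha' h hb, mul_left_comm (f _)]
    _ = ∫ z, ∫ x, f x * mixedBetaDens a a' b x z := integral_integral_swap hint
    _ = _ := by
        simp only [integral_mul_mixedBetaDens_left a ha' hb,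
          integral_betaMeasure (sub_pos.2 h) ha']

lemma abs_weightedMix_le (ha' : 0 < a') (hz : z ∈ Ioo (0 : ℝ) 1) (hy : y ∈ Ioo (0 : ℝ) 1)
    {f : ℝ → ℝ} {C : ℝ} (hC : ∀ x, |f x| ≤ C) : |weightedMix f a' z y| ≤ C := by
  have hzx : z ≤ z + (1 - z) * y :=
    le_add_of_nonneg_right (mul_nonneg (sub_nonneg.2 hz.2.le) hy.1.le)
  have hpos : 0 < z + (1 - z) * y := hz.1.trans_le hzx
  have hdiv : 0 ≤ z / (z + (1 - z) * y) := div_nonneg hz.1.le hpos.le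
  rw [weightedMix, abs_mul, abs_of_nonneg (rpow_nonneg hdiv a')]
  exact (mul_le_of_le_one_right (abs_nonneg _)
    (rpow_le_one hdiv ((div_le_one hpos).2 hzx) ha'.le)).trans (hC _)

lemma measurable_weightedMix {f : ℝ → ℝ} (hf : Measurable f) (a' : ℝ) :
    Measurable (Function.uncurry (weightedMix f a')) := by
  unfold weightedMix Function.uncurry
  fun_prop

lemma tendsto_weightedMix (a' : ℝ) (hz : 0 < z) {f : ℝ → ℝ} (hf : ContinuousAt f z) :
    Tendsto (weightedMix f a' z) (𝓝[>] 0) (𝓝 (f z)) := by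
  have hX : Tendsto (fun y => z + (1 - z) * y) (𝓝[>] 0) (𝓝 z) := by
    have hcont : ContinuousAt (fun y => z + (1 - z) * y) 0 := by fun_prop
    simpa using hcont.tendsto.mono_left nhdsWithin_le_nhds
  have hweight : Tendsto (fun y => (z / (z + (1 - z) * y)) ^ a') (𝓝[>] 0) (𝓝 1) := by
    have hdiv := (tendsto_const_nhds (x := z)).div hX hz.ne'
    rw [div_self hz.ne'] at hdiv
    simpa using hdiv.rpow_const (p := a') (.inl one_ne_zero)
  have hmul := (hf.tendsto.comp hX).mul hweight
  rw [mul_one] at hmul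
  exact hmul

lemma tendsto_integral_integral_weightedMix {p : ℝ} (hp : 0 < p) (ha' : 0 < a')
    {f : ℝ → ℝ} {C : ℝ} (hf : Continuous f) (hC : ∀ x, |f x| ≤ C) :
    Tendsto (fun b => ∫ z, ∫ y, weightedMix f a' z y ∂betaMeasure a' b ∂betaMeasure p a') atTop
      (𝓝 (∫ z, f z ∂betaMeasure p a')) := by
  have := isProbabilityMeasureBeta hp ha'
  have hmeas := measurable_weightedMix hf.measurable a'
  refine tendsto_integral_filter_of_dominated_convergence (fun _ => C) ?_ ?_
    (integrable_const C) ?_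
  · filter_upwards [eventually_gt_atTop 0] with b hb
    have := isProbabilityMeasureBeta ha' hb
    exact hmeas.stronglyMeasurable.integral_prod_right.aestronglyMeasurable
  · filter_upwards [eventually_gt_atTop 0] with b hb
    have := isProbabilityMeasureBeta ha' hb
    filter_upwards [ae_mem_Ioo_betaMeasure p a'] with z hz
    have hbound : ∀ᵐ y ∂betaMeasure a' b, ‖weightedMix f a' z y‖ ≤ C :=
      (ae_mem_Ioo_betaMeasure a' b).mono fun y hy => abs_weightedMix_le ha' hz hy hC
    simpa only [probReal_univ, mul_one] using norm_integral_le_of_norm_le_const hbound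
  · filter_upwards [ae_mem_Ioo_betaMeasure p a'] with z hz
    exact tendsto_integral_betaMeasure_atTop ha' (hmeas.comp measurable_prodMk_left)
      (fun y hy => abs_weightedMix_le ha' hz hy hC) (tendsto_weightedMix a' hz.1 hf.continuousAt)

lemma tendsto_integral_bhMeasure_atTop_right (ha' : 0 < a') (h : a' < a) {f : ℝ → ℝ} {C : ℝ}
    (hf : Continuous f) (hC : ∀ x, |f x| ≤ C) :
    Tendsto (fun b => ∫ x, f x ∂bhMeasure a a' b) atTop
      (𝓝 (∫ x, f x ∂betaMeasure (a - a') a')) := by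
  have hp := sub_pos.2 h
  have := isProbabilityMeasureBeta hp ha'
  have hden := tendsto_integral_integral_weightedMix hp ha' (f := fun _ => 1) continuous_const
    fun _ => abs_one.le
  simp only [integral_const, probReal_univ, smul_eq_mul, mul_one] at hden
  have hratio := (tendsto_integral_integral_weightedMix hp ha' hf hC).div hden one_ne_zero
  rw [div_one] at hratio
  refine hratio.congr' ?_
  filter_upwards [eventually_gt_atTop 0] with b hb
  have hden_eq := mixedBetaConst_mul_integral_mul_F21 ha' h hb (f := fun _ => 1)
    measurable_const fun _ => abs_one.le
  rw [Pi.div_apply, ← mixedBetaConst_mul_integral_mul_F21 ha' h hb hf.measurable hC, ← hden_eq,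
    mul_div_mul_left _ _ (mixedBetaConst_pos ha' h hb).ne', integral_bhMeasure (ha'.trans h) ha' hb]
  simp only [one_mul]

end MixedBeta

end BetaHypergeometric

theorem bh_weak_limits (a : ℝ) (ha : 0 < a) :
    (∀ b : ℝ, 0 < b → ∀ f : BoundedContinuousFunction ℝ ℝ,
        Filter.Tendsto (fun a' : ℝ => ∫ x, f x ∂(bhMeasure a a' b)) Filter.atTop
          (nhds (∫ x, f x ∂(beta1 a b)))) ∧
    (∀ a' : ℝ, 0 < a' → a' < a → ∀ f : BoundedContinuousFunction ℝ ℝ,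
        Filter.Tendsto (fun b : ℝ => ∫ x, f x ∂(bhMeasure a a' b)) Filter.atTop
          (nhds (∫ x, f x ∂(beta1 (a - a') a')))) := by
  simp only [BetaHypergeometric.beta1_eq_betaMeasure]
  constructor
  · intro b hb f
    exact BetaHypergeometric.tendsto_integral_bhMeasure_atTop_middle ha hb
      f.continuous.measurable f.norm_coe_le_norm
  · intro a' ha' haa' f
    exact BetaHypergeometric.tendsto_integral_bhMeasure_atTop_right ha' haa'
      f.continuous f.norm_coe_le_norm
end

section
/- Let a, b > 0 be fixed. As a → 0⁺ the distributions μ_{a,a',b} converge weakly to the Dirac measure δ₀ at 0, and as a → ∞ they converge weakly to the Dirac measure δ₁ at 1. -/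
open MeasureTheory ProbabilityTheory Real Set Filter Topology

open Asymptotics

/-
The measure `μ_{a,a',b}` is a mixture of the distributions `Beta(a + n, b)`, with weights
proportional to the terms of `₃F₂(a, a, b; a + b, a + a'; 1)`. Averaging the means
`(a + n) / (a + n + b)` over the mixture gives

  `E X = a / (a + b) * ₃F₂(a + 1, a, b; a + 1 + b, a + a'; 1) / ₃F₂(a, a, b; a + b, a + a'; 1)`.

As `(a)_n / (a + c)_n` is monotone in `a` when `c ≥ 0`, the numerator stays bounded as `a → 0⁺`,
and the denominator is at least `1`, so `E X → 0`. Every component has `E (1 - X) ≤ b / (a + b)`,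
so `E (1 - X) → 0` as `a → ∞`. By Markov's inequality, probability measures whose mean distance to
a point `c` tends to `0` converge weakly to `δ_c`.
-/

section Concentration

variable {ι X : Type*} {l : Filter ι} [MeasurableSpace X] {μ : ι → Measure X} {c : X}

theorem tendsto_integral_of_tendsto_measure_compl_nhds [TopologicalSpace X]
    [OpensMeasurableSpace X] (hμ : ∀ᶠ i in l, IsProbabilityMeasure (μ i))
    (hc : ∀ U ∈ 𝓝 c, Tendsto (fun i => μ i Uᶜ) l (𝓝 0)) (f : BoundedContinuousFunction X ℝ) :
    Tendsto (fun i => ∫ x, f x ∂μ i) l (𝓝 (f c)) := by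
  rw [Metric.tendsto_nhds]
  intro ε hε
  set U : Set X := {x | dist (f x) (f c) < ε / 2}
  have hU : IsOpen U := isOpen_lt (f.continuous.dist continuous_const) continuous_const
  have hcU : U ∈ 𝓝 c := hU.mem_nhds (by simpa [U] using hε)
  have hsmall : Tendsto (fun i => 2 * ‖f‖ * (μ i).real Uᶜ) l (𝓝 0) := by
    simpa [Measure.real, Function.comp_def] using
      ((ENNReal.tendsto_toReal ENNReal.zero_ne_top).comp (hc U hcU)).const_mul (2 * ‖f‖)
  filter_upwards [hμ, hsmall.eventually_lt_const (half_pos hε)] with i _ hi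
  have hpoint (x : X) : ‖f x - f c‖ ≤ ε / 2 + Uᶜ.indicator (fun _ => 2 * ‖f‖) x := by
    rw [← dist_eq_norm]
    by_cases hx : x ∈ U
    · simpa [hx] using hx.le
    · simpa [hx] using (f.dist_le_two_norm x c).trans (by linarith)
  have hind : Integrable (Uᶜ.indicator fun _ => 2 * ‖f‖) (μ i) :=
    (integrable_const _).indicator hU.measurableSet.compl
  calc dist (∫ x, f x ∂μ i) (f c) = ‖∫ x, (f x - f c) ∂μ i‖ := by
        rw [integral_sub (f.integrable _) (integrable_const _), dist_eq_norm]
        simp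
    _ ≤ ∫ x, (ε / 2 + Uᶜ.indicator (fun _ => 2 * ‖f‖) x) ∂μ i :=
        norm_integral_le_of_norm_le ((integrable_const _).add hind) (ae_of_all _ hpoint)
    _ = ε / 2 + 2 * ‖f‖ * (μ i).real Uᶜ := by
        rw [integral_add (integrable_const _) hind,
          integral_indicator_const _ hU.measurableSet.compl]
        simp [mul_comm]
    _ < ε := by linarith

theorem tendsto_integral_of_tendsto_lintegral_edist [PseudoEMetricSpace X]
    [OpensMeasurableSpace X] (hμ : ∀ᶠ i in l, IsProbabilityMeasure (μ i))
    (hc : Tendsto (fun i => ∫⁻ x, edist x c ∂μ i) l (𝓝 0)) (f : BoundedContinuousFunction X ℝ) :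
    Tendsto (fun i => ∫ x, f x ∂μ i) l (𝓝 (f c)) := by
  refine tendsto_integral_of_tendsto_measure_compl_nhds hμ (fun U hU => ?_) f
  obtain ⟨ε, hε, hball⟩ := (nhds_basis_uniformity uniformity_basis_edist_nnreal).mem_iff.1 hU
  have hε' : (ε : ENNReal) ≠ 0 := by simpa using hε.ne'
  have hmarkov (i : ι) : μ i Uᶜ ≤ (∫⁻ x, edist x c ∂μ i) / ε :=
    calc μ i Uᶜ ≤ μ i {x | (ε : ENNReal) ≤ edist x c} :=
          measure_mono fun x hx => not_lt.1 fun h : edist x c < ε => hx (hball h)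
      _ ≤ (∫⁻ x, edist x c ∂μ i) / ε :=
          meas_ge_le_lintegral_div measurable_edist_left.aemeasurable hε' ENNReal.coe_ne_top
  refine tendsto_of_tendsto_of_tendsto_of_le_of_le tendsto_const_nhds ?_
    (fun _ => zero_le) hmarkov
  simpa using ENNReal.Tendsto.div_const hc (Or.inr hε')

end Concentration

section Pochhammer

lemma poch_zero (a : ℝ) : poch a 0 = 1 := Finset.prod_range_zero _

lemma poch_succ (a : ℝ) (n : ℕ) : poch a (n + 1) = poch a n * (a + n) :=
  Finset.prod_range_succ _ _

lemma poch_succ_left (a : ℝ) (n : ℕ) : poch a (n + 1) = a * poch (a + 1) n := by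
  simp only [poch, Finset.prod_range_succ', Nat.cast_zero, add_zero, Nat.cast_add, Nat.cast_one,
    mul_comm a, add_assoc, add_comm (1 : ℝ)]

lemma poch_mul_add_natCast (a : ℝ) (n : ℕ) : poch a n * (a + n) = a * poch (a + 1) n := by
  rw [← poch_succ, poch_succ_left]

lemma poch_pos {a : ℝ} (ha : 0 < a) (n : ℕ) : 0 < poch a n :=
  Finset.prod_pos fun i _ => by positivity

lemma poch_eq_eval_ascPochhammer (a : ℝ) (n : ℕ) : poch a n = (ascPochhammer ℝ n).eval a := by
  induction n with
  | zero => simp [poch_zero]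
  | succ n ih => rw [poch_succ, ascPochhammer_succ_eval, ih]

lemma poch_div_poch_add_le {a α c : ℝ} (ha : 0 < a) (hα : a ≤ α) (hc : 0 ≤ c) (n : ℕ) :
    poch a n / poch (a + c) n ≤ poch α n / poch (α + c) n := by
  simp only [poch, ← Finset.prod_div_distrib]
  refine Finset.prod_le_prod (fun i _ => by positivity) fun i _ => ?_
  rw [div_le_div_iff₀ (by positivity) (by linarith [i.cast_nonneg (α := ℝ)])]
  nlinarith

lemma ne_neg_natCast_of_pos {a : ℝ} (ha : 0 < a) (m : ℕ) : a ≠ -m := by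
  linarith [m.cast_nonneg (α := ℝ), ha]

lemma poch_isTheta {a : ℝ} (ha : ∀ m : ℕ, a ≠ -m) :
    poch a =Θ[atTop] fun n => (n.factorial : ℝ) * (n : ℝ) ^ (a - 1) := by
  have hlim : Tendsto (fun n : ℕ => (GammaSeq a n)⁻¹ * (n / (n + a))) atTop (𝓝 (Gamma a)⁻¹) := by
    simpa using ((GammaSeq_tendsto_Gamma a).inv₀ (Gamma_ne_zero ha)).mul
      (tendsto_natCast_div_add_atTop a)
  refine (isTheta_of_div_tendsto_nhds_ne_zero (hlim.congr' ?_)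
    (inv_ne_zero (Gamma_ne_zero ha))).symm
  filter_upwards [eventually_ne_atTop 0] with n hn
  have hn' : (n : ℝ) ≠ 0 := Nat.cast_ne_zero.2 hn
  have han : (n : ℝ) + a ≠ 0 := fun h => ha n (by linarith)
  have hseq : GammaSeq a n = (n : ℝ) ^ a * n.factorial / (poch a n * (n + a)) := by
    rw [add_comm (n : ℝ) a, ← poch_succ, poch, GammaSeq]
  rw [hseq, rpow_sub_one hn']
  field_simp

end Pochhammer

section HypergeometricSeries

/-- The `n`-th term of the series `F32one`, that is of `₃F₂(a₁, a₂, a₃; b₁, b₂; 1)`. -/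
noncomputable def F32term (a₁ a₂ a₃ b₁ b₂ : ℝ) (n : ℕ) : ℝ :=
  poch a₁ n * poch a₂ n * poch a₃ n / ((n.factorial : ℝ) * poch b₁ n * poch b₂ n)

variable {a₁ a₂ a₃ b₁ b₂ : ℝ}

lemma F32term_pos (ha₁ : 0 < a₁) (ha₂ : 0 < a₂) (ha₃ : 0 < a₃) (hb₁ : 0 < b₁) (hb₂ : 0 < b₂)
    (n : ℕ) : 0 < F32term a₁ a₂ a₃ b₁ b₂ n := by
  have := poch_pos ha₁ n
  have := poch_pos ha₂ n
  have := poch_pos ha₃ n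
  have := poch_pos hb₁ n
  have := poch_pos hb₂ n
  unfold F32term
  positivity

theorem summable_F32term (ha₁ : ∀ m : ℕ, a₁ ≠ -m) (ha₂ : ∀ m : ℕ, a₂ ≠ -m)
    (ha₃ : ∀ m : ℕ, a₃ ≠ -m) (hb₁ : ∀ m : ℕ, b₁ ≠ -m) (hb₂ : ∀ m : ℕ, b₂ ≠ -m)
    (h : a₁ + a₂ + a₃ < b₁ + b₂) : Summable (F32term a₁ a₂ a₃ b₁ b₂) := by
  have htheta := (((poch_isTheta ha₁).mul (poch_isTheta ha₂)).mul (poch_isTheta ha₃)).div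
    (((isTheta_refl (fun n : ℕ => (n.factorial : ℝ)) atTop).mul (poch_isTheta hb₁)).mul
      (poch_isTheta hb₂))
  have hpow : Summable fun n : ℕ => (n : ℝ) ^ (a₁ + a₂ + a₃ - b₁ - b₂ - 1) :=
    summable_nat_rpow.2 (by linarith)
  refine summable_of_isBigO_nat hpow (htheta.isBigO.congr' EventuallyEq.rfl ?_)
  filter_upwards [eventually_gt_atTop 0] with n hn
  have hn' : (0 : ℝ) < n := Nat.cast_pos.2 hn
  simp only [rpow_sub hn', rpow_add hn', rpow_one]
  field_simp

theorem summable_F32term_of_pos (ha₁ : 0 < a₁) (ha₂ : 0 < a₂) (ha₃ : 0 < a₃) (hb₁ : 0 < b₁)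
    (hb₂ : 0 < b₂) (h : a₁ + a₂ + a₃ < b₁ + b₂) : Summable (F32term a₁ a₂ a₃ b₁ b₂) :=
  summable_F32term (ne_neg_natCast_of_pos ha₁) (ne_neg_natCast_of_pos ha₂)
    (ne_neg_natCast_of_pos ha₃) (ne_neg_natCast_of_pos hb₁) (ne_neg_natCast_of_pos hb₂) h

lemma one_le_F32one (ha₁ : 0 < a₁) (ha₂ : 0 < a₂) (ha₃ : 0 < a₃) (hb₁ : 0 < b₁)
    (hb₂ : 0 < b₂) (h : a₁ + a₂ + a₃ < b₁ + b₂) : 1 ≤ F32one a₁ a₂ a₃ b₁ b₂ := by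
  have hzero : F32term a₁ a₂ a₃ b₁ b₂ 0 = 1 := by simp [F32term, poch_zero]
  rw [← hzero]
  exact (summable_F32term_of_pos ha₁ ha₂ ha₃ hb₁ hb₂ h).le_tsum 0
    fun n _ => (F32term_pos ha₁ ha₂ ha₃ hb₁ hb₂ n).le

lemma F32one_add_le {α₁ α₂ c₁ c₂ : ℝ} (ha₁ : 0 < a₁) (ha₂ : 0 < a₂) (ha₃ : 0 < a₃)
    (hα₁ : a₁ ≤ α₁) (hα₂ : a₂ ≤ α₂) (hc₁ : 0 ≤ c₁) (hc₂ : 0 ≤ c₂) (h : a₃ < c₁ + c₂) :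
    F32one a₁ a₂ a₃ (a₁ + c₁) (a₂ + c₂) ≤ F32one α₁ α₂ a₃ (α₁ + c₁) (α₂ + c₂) := by
  have hfactor (x y z w : ℝ) (n : ℕ) : F32term x y a₃ z w n =
      poch x n / poch z n * (poch y n / poch w n) * (poch a₃ n / n.factorial) := by
    rw [F32term]
    ring
  refine Summable.tsum_le_tsum (fun n => ?_)
    (summable_F32term_of_pos ha₁ ha₂ ha₃ (by linarith) (by linarith) (by linarith))
    (summable_F32term_of_pos (by linarith) (by linarith) ha₃ (by linarith) (by linarith)
      (by linarith))
  change F32term _ _ _ _ _ n ≤ F32term _ _ _ _ _ n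
  have := poch_pos ha₂ n
  have := poch_pos (show 0 < a₂ + c₂ by linarith) n
  have := poch_pos (ha₁.trans_le hα₁) n
  have := poch_pos (show 0 < α₁ + c₁ by linarith) n
  have := poch_pos ha₃ n
  rw [hfactor, hfactor]
  gcongr ?_ * ?_ * _
  · exact poch_div_poch_add_le ha₁ hα₁ hc₁ n
  · exact poch_div_poch_add_le ha₂ hα₂ hc₂ n

lemma hasSum_F21 {a b c x : ℝ} (ha : ∀ m : ℕ, a ≠ -m) (hb : ∀ m : ℕ, b ≠ -m)
    (hc : ∀ m : ℕ, c ≠ -m) (hx : |x| < 1) :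
    HasSum (fun n : ℕ => poch a n * poch b n / ((n.factorial : ℝ) * poch c n) * x ^ n)
      (F21 a b c x) := by
  have hradius : (ordinaryHypergeometricSeries ℝ a b c).radius = 1 :=
    ordinaryHypergeometricSeries_radius_eq_one ℝ a b c fun m =>
      ⟨fun h => ha m (by linarith), fun h => hb m (by linarith), fun h => hc m (by linarith)⟩
  have hmem : x ∈ Metric.eball (0 : ℝ) (ordinaryHypergeometricSeries ℝ a b c).radius := by
    simpa [hradius, edist_dist] using hx
  refine Summable.hasSum (((ordinaryHypergeometricSeries ℝ a b c).summable hmem).congr fun n => ?_)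
  rw [ordinaryHypergeometricSeries_apply_eq, smul_eq_mul]
  simp only [← poch_eq_eval_ascPochhammer]
  ring

end HypergeometricSeries

section Beta

lemma beta_comm (p q : ℝ) : beta p q = beta q p := by
  rw [beta, beta, mul_comm, add_comm]

lemma beta_add_one_left {p q : ℝ} (hp : p ≠ 0) (hpq : p + q ≠ 0) :
    beta (p + 1) q = p / (p + q) * beta p q := by
  rw [beta, beta, add_right_comm, Gamma_add_one hp, Gamma_add_one hpq,
    mul_assoc, mul_div_mul_comm]

lemma beta_add_natCast_left {p q : ℝ} (hp : ∀ m : ℕ, p ≠ -m) (hpq : ∀ m : ℕ, p + q ≠ -m)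
    (n : ℕ) : beta (p + n) q = poch p n / poch (p + q) n * beta p q := by
  induction n with
  | zero => simp [poch_zero]
  | succ n ih =>
    have hpn : p + n ≠ 0 := fun h => hp n (by linarith)
    have hpqn : p + n + q ≠ 0 := fun h => hpq n (by linarith)
    rw [Nat.cast_succ, ← add_assoc, beta_add_one_left hpn hpqn, ih, poch_succ, poch_succ,
      add_right_comm p q, ← mul_assoc, div_mul_div_comm, mul_comm (p + n), mul_comm (p + n + q)]

lemma betaPDFReal_nonneg {p q : ℝ} (hp : 0 < p) (hq : 0 < q) (x : ℝ) : 0 ≤ betaPDFReal p q x := by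
  by_cases hx : 0 < x ∧ x < 1
  · exact (betaPDFReal_pos hx.1 hx.2 hp hq).le
  · simp [betaPDFReal, hx]

lemma measurable_betaPDF (p q : ℝ) : Measurable (betaPDF p q) :=
  (measurable_betaPDFReal p q).ennreal_ofReal

lemma betaPDFReal_one_sub (p q x : ℝ) : betaPDFReal p q (1 - x) = betaPDFReal q p x := by
  simp only [betaPDFReal, sub_pos, sub_lt_self_iff, sub_sub_cancel, beta_comm p q, mul_right_comm,
    and_comm]

lemma mul_betaPDFReal {p q : ℝ} (hp : p ≠ 0) (hpq : p + q ≠ 0) (x : ℝ) :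
    x * betaPDFReal p q x = p / (p + q) * betaPDFReal (p + 1) q x := by
  by_cases hx : 0 < x ∧ x < 1
  · rw [betaPDFReal, betaPDFReal, if_pos hx, if_pos hx, beta_add_one_left hp hpq,
      add_sub_right_comm, rpow_add_one hx.1.ne']
    field_simp
  · simp [betaPDFReal, hx]

theorem lintegral_edist_zero_betaMeasure {p q : ℝ} (hp : 0 < p) (hq : 0 < q) :
    ∫⁻ x, edist x 0 ∂betaMeasure p q = ENNReal.ofReal (p / (p + q)) := by
  have hdens (x : ℝ) :
      betaPDF p q x * edist x 0 = ENNReal.ofReal (p / (p + q)) * betaPDF (p + 1) q x := by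
    by_cases hx : 0 < x
    · rw [edist_dist, dist_zero_right, norm_of_nonneg hx.le, mul_comm, betaPDF, betaPDF,
        ← ENNReal.ofReal_mul hx.le, mul_betaPDFReal hp.ne' (by positivity),
        ENNReal.ofReal_mul (by positivity)]
    · simp [betaPDF_eq_zero_of_nonpos (not_lt.1 hx)]
  rw [betaMeasure, lintegral_withDensity_eq_lintegral_mul _ (measurable_betaPDF p q)
    measurable_edist_left]
  simp only [Pi.mul_apply, hdens]
  rw [lintegral_const_mul _ (measurable_betaPDF _ q), lintegral_betaPDF_eq_one (by positivity) hq,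
    mul_one]

theorem lintegral_one_sub_betaMeasure (p q : ℝ) {g : ℝ → ENNReal} (hg : Measurable g) :
    ∫⁻ x, g (1 - x) ∂betaMeasure p q = ∫⁻ x, g x ∂betaMeasure q p := by
  rw [betaMeasure, betaMeasure,
    lintegral_withDensity_eq_lintegral_mul _ (measurable_betaPDF p q) (by fun_prop),
    lintegral_withDensity_eq_lintegral_mul _ (measurable_betaPDF q p) hg,
    ← lintegral_sub_left_eq_self _ 1]
  simp only [Pi.mul_apply, betaPDF, betaPDFReal_one_sub, sub_sub_cancel]

theorem lintegral_edist_one_betaMeasure {p q : ℝ} (hp : 0 < p) (hq : 0 < q) :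
    ∫⁻ x, edist x 1 ∂betaMeasure p q = ENNReal.ofReal (q / (p + q)) := by
  rw [add_comm p q, ← lintegral_edist_zero_betaMeasure hq hp,
    ← lintegral_one_sub_betaMeasure p q measurable_edist_left]
  simp [edist_dist, Real.dist_eq, abs_sub_comm]

end Beta

section Mixture

/-- The weight of `Beta(a + n, b)` in the decomposition of `bhMeasure a a' b` as a mixture of beta
distributions. -/
noncomputable def bhWeight (a a' b : ℝ) (n : ℕ) : ℝ :=
  F32term a a b (a + b) (a + a') n / F32one a a b (a + b) (a + a')

variable {a a' b : ℝ}

lemma one_le_F32one_bh (ha : 0 < a) (ha' : 0 < a') (hb : 0 < b) :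
    1 ≤ F32one a a b (a + b) (a + a') :=
  one_le_F32one ha ha hb (by positivity) (by positivity) (by linarith)

lemma bhWeight_nonneg (ha : 0 < a) (ha' : 0 < a') (hb : 0 < b) (n : ℕ) :
    0 ≤ bhWeight a a' b n :=
  div_nonneg (F32term_pos ha ha hb (by positivity) (by positivity) n).le
    (zero_le_one.trans (one_le_F32one_bh ha ha' hb))

lemma tsum_ofReal_bhWeight (ha : 0 < a) (ha' : 0 < a') (hb : 0 < b) :
    ∑' n, ENNReal.ofReal (bhWeight a a' b n) = 1 := by
  have hF : F32one a a b (a + b) (a + a') ≠ 0 :=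
    (zero_lt_one.trans_le (one_le_F32one_bh ha ha' hb)).ne'
  have hsum : Summable (F32term a a b (a + b) (a + a')) :=
    summable_F32term_of_pos ha ha hb (by positivity) (by positivity) (by linarith)
  rw [← ENNReal.ofReal_tsum_of_nonneg (bhWeight_nonneg ha ha' hb) (hsum.div_const _)]
  simp only [bhWeight, tsum_div_const]
  exact (congrArg ENNReal.ofReal (div_self hF)).trans ENNReal.ofReal_one

lemma bhWeight_div_beta (ha : 0 < a) (hb : 0 < b) (n : ℕ) :
    bhWeight a a' b n / beta (a + n) b =
      Cbh a a' b * (poch a n * poch b n / (n.factorial * poch (a + a') n)) := by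
  have hpa := (poch_pos ha n).ne'
  have hpab := (poch_pos (add_pos ha hb) n).ne'
  have hΓa := (Gamma_pos_of_pos ha).ne'
  have hΓb := (Gamma_pos_of_pos hb).ne'
  have hΓab := (Gamma_pos_of_pos (add_pos ha hb)).ne'
  rw [beta_add_natCast_left (ne_neg_natCast_of_pos ha) (ne_neg_natCast_of_pos (add_pos ha hb)),
    bhWeight, F32term, Cbh, beta]
  field_simp

theorem hasSum_bhDens (ha : 0 < a) (ha' : 0 < a') (hb : 0 < b) (x : ℝ) :
    HasSum (fun n : ℕ => bhWeight a a' b n * betaPDFReal (a + n) b x) (bhDens a a' b x) := by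
  by_cases hx : 0 < x ∧ x < 1
  · have hF21 := (hasSum_F21 (ne_neg_natCast_of_pos ha) (ne_neg_natCast_of_pos hb)
      (ne_neg_natCast_of_pos (add_pos ha ha')) (abs_lt.2 ⟨by linarith, hx.2⟩)).mul_left
      (Cbh a a' b * x ^ (a - 1) * (1 - x) ^ (b - 1))
    rw [bhDens, if_pos hx]
    refine hF21.congr_fun fun n => ?_
    have hpow : x ^ (a + n - 1) = x ^ (a - 1) * x ^ n := by
      rw [add_sub_right_comm, rpow_add_natCast hx.1.ne']
    calc bhWeight a a' b n * betaPDFReal (a + n) b x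
        = bhWeight a a' b n / beta (a + n) b * (x ^ (a - 1) * x ^ n * (1 - x) ^ (b - 1)) := by
          rw [betaPDFReal, if_pos hx, hpow]
          ring
      _ = _ := by
          rw [bhWeight_div_beta ha hb]
          ring
  · simp [bhDens, betaPDFReal, hx]

theorem bhMeasure_eq_sum_betaMeasure (ha : 0 < a) (ha' : 0 < a') (hb : 0 < b) :
    bhMeasure a a' b =
      Measure.sum fun n : ℕ => ENNReal.ofReal (bhWeight a a' b n) • betaMeasure (a + n) b := by
  have hdens : (fun x => ENNReal.ofReal (bhDens a a' b x)) =
      ∑' n : ℕ, ENNReal.ofReal (bhWeight a a' b n) • betaPDF (a + n) b := by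
    ext x
    have hsum := hasSum_bhDens ha ha' hb x
    have hweight := bhWeight_nonneg ha ha' hb
    rw [← hsum.tsum_eq, ENNReal.tsum_apply, ENNReal.ofReal_tsum_of_nonneg
      (fun n => mul_nonneg (hweight n) (betaPDFReal_nonneg (by positivity) hb x)) hsum.summable]
    exact tsum_congr fun n => ENNReal.ofReal_mul (hweight n)
  rw [bhMeasure, hdens, withDensity_tsum fun n => (measurable_betaPDF _ b).const_smul _]
  simp only [withDensity_smul _ (measurable_betaPDF _ b), betaMeasure]

theorem lintegral_bhMeasure (ha : 0 < a) (ha' : 0 < a') (hb : 0 < b) (g : ℝ → ENNReal) :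
    ∫⁻ x, g x ∂bhMeasure a a' b =
      ∑' n : ℕ, ENNReal.ofReal (bhWeight a a' b n) * ∫⁻ x, g x ∂betaMeasure (a + n) b := by
  simp only [bhMeasure_eq_sum_betaMeasure ha ha' hb, lintegral_sum_measure, lintegral_smul_measure,
    smul_eq_mul]

theorem isProbabilityMeasure_bhMeasure (ha : 0 < a) (ha' : 0 < a') (hb : 0 < b) :
    IsProbabilityMeasure (bhMeasure a a' b) where
  measure_univ := by
    have hbeta (n : ℕ) : betaMeasure (a + n) b univ = 1 :=
      (isProbabilityMeasureBeta (by positivity) hb).measure_univ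
    simp [bhMeasure_eq_sum_betaMeasure ha ha' hb, hbeta, tsum_ofReal_bhWeight ha ha' hb]

end Mixture

section Moments

lemma bhWeight_mul_beta_mean (a a' b : ℝ) (n : ℕ) :
    bhWeight a a' b n * ((a + n) / (a + n + b)) =
      a / (a + b) * (F32term (a + 1) a b (a + 1 + b) (a + a') n /
        F32one a a b (a + b) (a + a')) := by
  have hshift : poch a n / poch (a + b) n * ((a + n) / (a + n + b)) =
      a / (a + b) * (poch (a + 1) n / poch (a + 1 + b) n) := by
    rw [div_mul_div_comm, add_right_comm a n b, poch_mul_add_natCast, poch_mul_add_natCast,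
      mul_div_mul_comm, add_right_comm a b 1]
  calc bhWeight a a' b n * ((a + n) / (a + n + b))
      = poch a n / poch (a + b) n * ((a + n) / (a + n + b)) *
          (poch a n * poch b n / (n.factorial * poch (a + a') n) /
            F32one a a b (a + b) (a + a')) := by
        rw [bhWeight, F32term]
        ring
    _ = _ := by
        rw [hshift, F32term]
        ring

variable {a a' b : ℝ}

theorem lintegral_edist_zero_bhMeasure (ha : 0 < a) (ha' : 0 < a') (hb : 0 < b) :
    ∫⁻ x, edist x 0 ∂bhMeasure a a' b =
      ENNReal.ofReal (a / (a + b) * (F32one (a + 1) a b (a + 1 + b) (a + a') /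
        F32one a a b (a + b) (a + a'))) := by
  have hsum : Summable (F32term (a + 1) a b (a + 1 + b) (a + a')) :=
    summable_F32term_of_pos (by positivity) ha hb (by positivity) (by positivity) (by linarith)
  have hterm (n : ℕ) : ENNReal.ofReal (bhWeight a a' b n) * ∫⁻ x, edist x 0 ∂betaMeasure (a + n) b =
      ENNReal.ofReal (a / (a + b) * (F32term (a + 1) a b (a + 1 + b) (a + a') n /
        F32one a a b (a + b) (a + a'))) := by
    rw [lintegral_edist_zero_betaMeasure (by positivity) hb,
      ← ENNReal.ofReal_mul (bhWeight_nonneg ha ha' hb n), bhWeight_mul_beta_mean]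
  rw [lintegral_bhMeasure ha ha' hb, tsum_congr hterm, ← ENNReal.ofReal_tsum_of_nonneg
    (fun n => ?_) ((hsum.div_const _).mul_left _), tsum_mul_left, tsum_div_const]
  · rfl
  · rw [← bhWeight_mul_beta_mean]
    exact mul_nonneg (bhWeight_nonneg ha ha' hb n) (by positivity)

theorem lintegral_edist_zero_bhMeasure_le (ha : 0 < a) (ha1 : a ≤ 1) (ha' : 0 < a') (hb : 0 < b) :
    ∫⁻ x, edist x 0 ∂bhMeasure a a' b ≤
      ENNReal.ofReal (a / (a + b) * F32one 2 1 b (2 + b) (1 + a')) := by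
  have hmono : F32one (a + 1) a b (a + 1 + b) (a + a') ≤ F32one 2 1 b (2 + b) (1 + a') :=
    F32one_add_le (by positivity) ha hb (by linarith) ha1 hb.le ha'.le (by linarith)
  have hnonneg : 0 ≤ F32one (a + 1) a b (a + 1 + b) (a + a') :=
    zero_le_one.trans
      (one_le_F32one (by positivity) ha hb (by positivity) (by positivity) (by linarith))
  rw [lintegral_edist_zero_bhMeasure ha ha' hb]
  gcongr
  exact (div_le_self hnonneg (one_le_F32one_bh ha ha' hb)).trans hmono

theorem lintegral_edist_one_bhMeasure_le (ha : 0 < a) (ha' : 0 < a') (hb : 0 < b) :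
    ∫⁻ x, edist x 1 ∂bhMeasure a a' b ≤ ENNReal.ofReal (b / (a + b)) :=
  calc ∫⁻ x, edist x 1 ∂bhMeasure a a' b
      = ∑' n : ℕ, ENNReal.ofReal (bhWeight a a' b n) * ENNReal.ofReal (b / (a + n + b)) := by
        rw [lintegral_bhMeasure ha ha' hb]
        exact tsum_congr fun n => by rw [lintegral_edist_one_betaMeasure (by positivity) hb]
    _ ≤ ∑' n : ℕ, ENNReal.ofReal (bhWeight a a' b n) * ENNReal.ofReal (b / (a + b)) := by
        gcongr with n
        linarith [n.cast_nonneg (α := ℝ)]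
    _ = ENNReal.ofReal (b / (a + b)) := by
        rw [ENNReal.tsum_mul_right, tsum_ofReal_bhWeight ha ha' hb, one_mul]

theorem tendsto_lintegral_edist_zero_bhMeasure (ha' : 0 < a') (hb : 0 < b) :
    Tendsto (fun a => ∫⁻ x, edist x 0 ∂bhMeasure a a' b) (𝓝[>] 0) (𝓝 0) := by
  have hcont : ContinuousAt (fun a : ℝ => a / (a + b) * F32one 2 1 b (2 + b) (1 + a')) 0 := by
    have : (0 : ℝ) + b ≠ 0 := by positivity
    fun_prop (disch := assumption)
  have hbound : Tendsto (fun a : ℝ => ENNReal.ofReal (a / (a + b) * F32one 2 1 b (2 + b) (1 + a')))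
      (𝓝[>] 0) (𝓝 0) := by
    simpa using ENNReal.tendsto_ofReal (hcont.tendsto.mono_left nhdsWithin_le_nhds)
  refine tendsto_of_tendsto_of_tendsto_of_le_of_le' tendsto_const_nhds hbound
    (Eventually.of_forall fun _ => zero_le) ?_
  filter_upwards [Ioc_mem_nhdsGT (zero_lt_one' ℝ)] with a ha
  exact lintegral_edist_zero_bhMeasure_le ha.1 ha.2 ha' hb

theorem tendsto_lintegral_edist_one_bhMeasure (ha' : 0 < a') (hb : 0 < b) :
    Tendsto (fun a => ∫⁻ x, edist x 1 ∂bhMeasure a a' b) atTop (𝓝 0) := by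
  have hbound : Tendsto (fun a : ℝ => ENNReal.ofReal (b / (a + b))) atTop (𝓝 0) := by
    simpa using ENNReal.tendsto_ofReal
      ((tendsto_atTop_add_const_right atTop b tendsto_id).const_div_atTop b)
  refine tendsto_of_tendsto_of_tendsto_of_le_of_le' tendsto_const_nhds hbound
    (Eventually.of_forall fun _ => zero_le) ?_
  filter_upwards [eventually_gt_atTop 0] with a ha
  exact lintegral_edist_one_bhMeasure_le ha ha' hb

end Moments

theorem bh_dirac_limits (a' b : ℝ) (ha' : 0 < a') (hb : 0 < b) :
    (∀ f : BoundedContinuousFunction ℝ ℝ,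
        Filter.Tendsto (fun a : ℝ => ∫ x, f x ∂(bhMeasure a a' b))
          (nhdsWithin 0 (Set.Ioi 0)) (nhds (f 0))) ∧
    (∀ f : BoundedContinuousFunction ℝ ℝ,
        Filter.Tendsto (fun a : ℝ => ∫ x, f x ∂(bhMeasure a a' b))
          Filter.atTop (nhds (f 1))) := by
  constructor
  · refine tendsto_integral_of_tendsto_lintegral_edist ?_
      (tendsto_lintegral_edist_zero_bhMeasure ha' hb)
    filter_upwards [self_mem_nhdsWithin] with a ha using isProbabilityMeasure_bhMeasure ha ha' hb
  · refine tendsto_integral_of_tendsto_lintegral_edist ?_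
      (tendsto_lintegral_edist_one_bhMeasure ha' hb)
    filter_upwards [eventually_gt_atTop 0] with a ha using isProbabilityMeasure_bhMeasure ha ha' hb
end
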